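/- arXiv:1906.01948 — 3 statements merged into one kernel-verified Lean document; each statement's English description precedes it below -/
import Mathlib

section
/- For every integer n ≥ 2, the map ds_n : J_n → J_{n−2} is surjective: for every g ∈ J_{n−2} there exists f ∈ J_n with ds_n(f) = g. -/
/-!
Common setup: `R n` is the ring of Laurent polynomials
`ℤ[x₁^{±1}, …, xₙ^{±1}]`, realized as the group algebra over `ℤ` of the
group `ℤ^n` of exponent vectors (`AddMonoidAlgebra ℤ (Fin n → ℤ)`).
-/

noncomputable section

/-- The ring `Rₙ = ℤ[x₁^{±1}, …, xₙ^{±1}]` of Laurent polynomials in `n` variables. -/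
abbrev R (n : ℕ) : Type := AddMonoidAlgebra ℤ (Fin n → ℤ)

/-- The variable `xᵢ` of `R n` (`i` is a `0`-based index). -/
def X {n : ℕ} (i : Fin n) : R n := AddMonoidAlgebra.single (Pi.single i (1 : ℤ)) 1

/-- The inverse `xᵢ⁻¹` of the variable `xᵢ` of `R n`. -/
def Xinv {n : ℕ} (i : Fin n) : R n := AddMonoidAlgebra.single (Pi.single i (-1 : ℤ)) 1

/-- The action of a permutation `w` on exponent vectors. -/
def permExp {n : ℕ} (w : Equiv.Perm (Fin n)) : (Fin n → ℤ) →+ (Fin n → ℤ) :=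
  AddMonoidHom.mk' (fun m => m ∘ w.symm) (fun _ _ => rfl)

/-- The action of `w ∈ Sₙ` on `R n`, permuting the variables (`xᵢ ↦ x_{w i}`). -/
def permHom {n : ℕ} (w : Equiv.Perm (Fin n)) : R n →+* R n :=
  AddMonoidAlgebra.mapDomainRingHom ℤ (permExp w)

/-- `f` is a symmetric Laurent polynomial, i.e. `f ∈ Rₙ^{Sₙ}`. -/
def SymmP {n : ℕ} (f : R n) : Prop := ∀ w : Equiv.Perm (Fin n), permHom w f = f

/-- The map of exponent groups underlying the evaluation
`xᵢ ↦ xᵢ (1 ≤ i ≤ n-2), x_{n-1} ↦ t, xₙ ↦ t⁻¹`; the second coordinate of the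
target records the exponent of `t`. -/
def evExp (n : ℕ) : (Fin n → ℤ) →+ ((Fin (n - 2) → ℤ) × ℤ) :=
  AddMonoidHom.mk'
    (fun m => (fun i => m (Fin.castLE (Nat.sub_le n 2) i),
      if h : 2 ≤ n then m ⟨n - 2, by omega⟩ - m ⟨n - 1, by omega⟩ else 0))
    (by
      intro a b
      refine Prod.ext (funext fun i => rfl) ?_
      by_cases h : 2 ≤ n
      · simp [h]; ring
      · simp [h])

/-- The evaluation homomorphism
`evₙ : ℤ[x₁^{±1},…,xₙ^{±1}] → ℤ[x₁^{±1},…,x_{n-2}^{±1}, t^{±1}]` determined by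
`xᵢ ↦ xᵢ` for `1 ≤ i ≤ n-2`, `x_{n-1} ↦ t`, `xₙ ↦ t⁻¹`.  The target is realized
as the group algebra of `ℤ^{n-2} × ℤ`, the last factor recording the exponent
of `t`. -/
def ev (n : ℕ) : R n →+* AddMonoidAlgebra ℤ ((Fin (n - 2) → ℤ) × ℤ) :=
  AddMonoidAlgebra.mapDomainRingHom ℤ (evExp n)

/-- An element of `ℤ[x₁^{±1},…,x_{n-2}^{±1}, t^{±1}]` "does not involve `t`",
i.e. it lies in the image of the subring `ℤ[x₁^{±1},…,x_{n-2}^{±1}]`. -/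
def NoT (n : ℕ) (g : AddMonoidAlgebra ℤ ((Fin (n - 2) → ℤ) × ℤ)) : Prop :=
  g ∈ Set.range
    (AddMonoidAlgebra.mapDomainRingHom ℤ (AddMonoidHom.inl (Fin (n - 2) → ℤ) ℤ))

/-- `J n`: for `n ≥ 2`, the set of symmetric Laurent polynomials `f` such that
`evₙ f` does not involve `t`; for `n = 0, 1` it is all of `Rₙ^{Sₙ}`. -/
def J (n : ℕ) : Set (R n) := {f | SymmP f ∧ (2 ≤ n → NoT n (ev n f))}

/-- Restriction of exponent vectors to the first `n - 2` coordinates. -/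
def resExp (n : ℕ) : (Fin n → ℤ) →+ (Fin (n - 2) → ℤ) :=
  AddMonoidHom.mk' (fun m i => m (Fin.castLE (Nat.sub_le n 2) i)) (fun _ _ => rfl)

/-- The ring homomorphism `R n → R (n-2)` which, on `J n`, is the
Duflo–Serganova map `dsₙ`: for `f ∈ J n` it is exactly `evₙ f` regarded as an
element of `ℤ[x₁^{±1},…,x_{n-2}^{±1}]` (the `t`-degree-`0` part of `evₙ f`). -/
def ds (n : ℕ) : R n →+* R (n - 2) :=
  AddMonoidAlgebra.mapDomainRingHom ℤ (resExp n)

/-- The product `∏_{1 ≤ i < j ≤ n} (1 - xᵢ xⱼ)`. -/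
def P (n : ℕ) : R n :=
  ∏ p ∈ Finset.univ.filter (fun p : Fin n × Fin n => p.1 < p.2), (1 - X p.1 * X p.2)

namespace DSaux

open Finset

/-- Two tuples with the same multiset of values differ by a permutation. -/
lemma exists_perm_of_map_eq {k : ℕ} {α : Type*} (u v : Fin k → α)
    (h : (univ : Finset (Fin k)).val.map u = (univ : Finset (Fin k)).val.map v) :
    ∃ σ : Equiv.Perm (Fin k), u = v ∘ σ := by
  classical
  have hc : ∀ c, Nonempty ({a // u a = c} ≃ {a // v a = c}) := by
    intro c
    rw [← Fintype.card_eq]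
    have := congrArg (Multiset.count c) h
    rw [Multiset.count_map, Multiset.count_map] at this
    rw [Fintype.card_subtype, Fintype.card_subtype]
    simp only [Finset.card, Finset.filter_val]
    simpa only [eq_comm] using this
  have e := fun c => (hc c).some
  refine ⟨Equiv.ofFiberEquiv e, ?_⟩
  funext a
  exact (Equiv.ofFiberEquiv_map e a).symm

/-- The variables as units. -/
def xu {n : ℕ} (i : Fin n) : (R n)ˣ where
  val := AddMonoidAlgebra.single (Pi.single i (1 : ℤ)) 1
  inv := AddMonoidAlgebra.single (Pi.single i (-1 : ℤ)) 1
  val_inv := by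
    rw [AddMonoidAlgebra.single_mul_single, ← Pi.single_add]; simp [AddMonoidAlgebra.one_def]
  inv_val := by
    rw [AddMonoidAlgebra.single_mul_single, ← Pi.single_add]; simp [AddMonoidAlgebra.one_def]

/-- The monomial homomorphism. -/
def monHom {n : ℕ} {B : Type*} [CommRing B] (u : Fin n → Bˣ) :
    Multiplicative (Fin n → ℤ) →* B where
  toFun m := ((∏ i, u i ^ (m.toAdd i) : Bˣ) : B)
  map_one' := by simp
  map_mul' a b := by
    rw [← Units.val_mul, ← Finset.prod_mul_distrib]
    simp [zpow_add]

/-- Evaluation of a Laurent polynomial at a tuple of units. -/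
def evalAt {n : ℕ} {B : Type*} [CommRing B] (u : Fin n → Bˣ) : R n →+* B :=
  (AddMonoidAlgebra.lift ℤ B (Fin n → ℤ) (monHom u)).toRingHom

lemma evalAt_single {n : ℕ} {B : Type*} [CommRing B] (u : Fin n → Bˣ) (m : Fin n → ℤ) :
    evalAt u (AddMonoidAlgebra.single m 1) = ((∏ i, u i ^ m i : Bˣ) : B) := by
  simp [evalAt, monHom]

lemma evalAt_xu {n : ℕ} {B : Type*} [CommRing B] (u : Fin n → Bˣ) (i : Fin n) :
    evalAt u (xu i : R n) = u i := by
  rw [xu, evalAt_single, Finset.prod_eq_single i]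
  · simp
  · intro j _ hj; simp [hj]
  · simp

lemma hom_ext_single {M : Type*} [AddMonoid M] {B : Type*} [CommRing B]
    {f g : AddMonoidAlgebra ℤ M →+* B}
    (h : ∀ m, f (AddMonoidAlgebra.single m 1) = g (AddMonoidAlgebra.single m 1)) : f = g := by
  refine AddMonoidAlgebra.ringHom_ext (fun r => ?_) h
  have : (AddMonoidAlgebra.single 0 r : AddMonoidAlgebra ℤ M) = (r : AddMonoidAlgebra ℤ M) := by
    simp [AddMonoidAlgebra.intCast_def]
  rw [this, map_intCast, map_intCast]

lemma single_eq_prod {n : ℕ} (m : Fin n → ℤ) :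
    (AddMonoidAlgebra.single m 1 : R n) = ((∏ i, xu i ^ m i : (R n)ˣ) : R n) := by
  have key : ∀ (i : Fin n) (a : ℤ),
      ((xu i ^ a : (R n)ˣ) : R n) = AddMonoidAlgebra.single (Pi.single i a) 1 := by
    intro i a
    have h1 : ∀ k : ℕ, ((xu i ^ k : (R n)ˣ) : R n) =
        AddMonoidAlgebra.single (Pi.single i (k : ℤ)) 1 := by
      intro k
      induction k with
      | zero => simp [AddMonoidAlgebra.one_def]
      | succ k ih =>
        rw [pow_succ, Units.val_mul, ih, xu, AddMonoidAlgebra.single_mul_single, ← Pi.single_add]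
        simp
    have h2 : ∀ k : ℕ, (((xu i)⁻¹ ^ k : (R n)ˣ) : R n) =
        AddMonoidAlgebra.single (Pi.single i (-k : ℤ)) 1 := by
      intro k
      induction k with
      | zero => simp [AddMonoidAlgebra.one_def]
      | succ k ih =>
        rw [pow_succ, Units.val_mul, ih, xu, Units.inv_mk, AddMonoidAlgebra.single_mul_single,
          ← Pi.single_add]
        simp; congr 2; ring
    obtain ⟨k, rfl | rfl⟩ := a.eq_nat_or_neg
    · rw [zpow_natCast]; exact h1 k
    · rw [zpow_neg, zpow_natCast, ← inv_pow]; exact h2 k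
  have h3 : ∀ s : Finset (Fin n), ((∏ i ∈ s, xu i ^ m i : (R n)ˣ) : R n) =
      AddMonoidAlgebra.single (∑ i ∈ s, Pi.single i (m i)) 1 := by
    intro s
    induction s using Finset.induction_on with
    | empty => simp [AddMonoidAlgebra.one_def]
    | insert a s ha ih =>
      rw [Finset.prod_insert ha, Finset.sum_insert ha, Units.val_mul, ih, key,
        AddMonoidAlgebra.single_mul_single]; simp
  rw [h3, Finset.univ_sum_single]

lemma hom_ext {n : ℕ} {B : Type*} [CommRing B] {f g : R n →+* B}
    (h : ∀ i : Fin n, f (xu i : R n) = g (xu i : R n)) : f = g := by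
  apply hom_ext_single
  intro m
  have h' : Units.map (f : R n →* B) ∘ (xu : Fin n → (R n)ˣ) =
      Units.map (g : R n →* B) ∘ xu := by
    funext i; ext; exact h i
  have h3 : ∀ f : R n →+* B, f (AddMonoidAlgebra.single m 1) =
      ((∏ i, (Units.map (f : R n →* B) ∘ (xu : Fin n → (R n)ˣ)) i ^ m i : Bˣ) : B) := by
    intro f
    rw [single_eq_prod]
    change ((Units.map (f : R n →* B) (∏ i, xu i ^ m i) : Bˣ) : B) = _
    rw [map_prod]; simp only [map_zpow, Function.comp]
  rw [h3, h3, h']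

lemma hom_evalAt {n : ℕ} {B C : Type*} [CommRing B] [CommRing C] (φ : B →+* C)
    (u : Fin n → Bˣ) (f : R n) :
    φ (evalAt u f) = evalAt (fun i => Units.map (φ : B →* C) (u i)) f := by
  have : φ.comp (evalAt u) = evalAt (fun i => Units.map (φ : B →* C) (u i)) := by
    apply hom_ext
    intro i
    rw [RingHom.comp_apply, evalAt_xu, evalAt_xu]; rfl
  exact DFunLike.congr_fun this f

lemma permHom_xu {n : ℕ} (w : Equiv.Perm (Fin n)) (i : Fin n) :
    permHom w (xu i : R n) = xu (w i) := by
  simp only [permHom, xu, AddMonoidAlgebra.mapDomainRingHom_apply,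
    AddMonoidAlgebra.mapDomain_single]
  congr 1
  funext j
  simp only [permExp, AddMonoidHom.mk'_apply, Function.comp, Pi.single_apply]
  simp [Equiv.symm_apply_eq]

lemma evalAt_perm {n : ℕ} {B : Type*} [CommRing B] {f : R n} (hf : SymmP f)
    (w : Equiv.Perm (Fin n)) (u : Fin n → Bˣ) : evalAt (u ∘ w) f = evalAt u f := by
  have : (evalAt u).comp (permHom w) = evalAt (u ∘ w) := by
    apply hom_ext
    intro i
    rw [RingHom.comp_apply, permHom_xu, evalAt_xu, evalAt_xu]; rfl
  rw [← this, RingHom.comp_apply, hf w]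

open Classical in
/-- The value of a symmetric Laurent polynomial at a multiset of units. -/
def val {k : ℕ} {B : Type*} [CommRing B] (g : R k) (s : Multiset Bˣ) : B :=
  if h : ∃ u : Fin k → Bˣ, (univ : Finset (Fin k)).val.map u = s then evalAt h.choose g else 0

lemma val_map {k : ℕ} {B : Type*} [CommRing B] {g : R k} (hg : SymmP g) (u : Fin k → Bˣ) :
    val g ((univ : Finset (Fin k)).val.map u) = evalAt u g := by
  have h : ∃ v : Fin k → Bˣ, (univ : Finset (Fin k)).val.map v =
    (univ : Finset (Fin k)).val.map u := ⟨u, rfl⟩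
  rw [val, dif_pos h]
  obtain ⟨σ, hσ⟩ := exists_perm_of_map_eq _ _ h.choose_spec
  rw [hσ, evalAt_perm hg]

lemma map_snoc {l : ℕ} {α : Type*} (u : Fin l → α) (t : α) :
    (univ : Finset (Fin (l + 1))).val.map (Fin.snoc u t : Fin (l + 1) → α) =
      t ::ₘ (univ : Finset (Fin l)).val.map u := by
  rw [Fin.univ_val_map, Fin.univ_val_map, List.ofFn_succ', List.concat_eq_append]
  simp only [Fin.snoc_castSucc, Fin.snoc_last]
  rw [Multiset.cons_coe, Multiset.coe_eq_coe]
  exact List.perm_append_singleton _ _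

lemma exists_tuple {k : ℕ} {α : Type*} (s : Multiset α) (hs : s.card = k) :
    ∃ u : Fin k → α, (univ : Finset (Fin k)).val.map u = s := by
  subst hs
  induction s using Multiset.induction with
  | empty => rw [Multiset.card_zero]; exact ⟨Fin.elim0, rfl⟩
  | cons a s ih =>
    obtain ⟨u, hu⟩ := ih
    rw [Multiset.card_cons]
    exact ⟨Fin.snoc u a, by rw [map_snoc, hu]⟩

lemma hom_val {k : ℕ} {B C : Type*} [CommRing B] [CommRing C] {g : R k} (hg : SymmP g)
    (φ : B →+* C) (s : Multiset Bˣ) (hs : s.card = k) :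
    φ (val g s) = val g (s.map (Units.map (φ : B →* C))) := by
  obtain ⟨u, rfl⟩ := exists_tuple s hs
  rw [val_map hg, hom_evalAt, Multiset.map_map, ← val_map hg]; rfl

/-- Evaluation on the target of `ev`. -/
def evalT {l : ℕ} {B : Type*} [CommRing B] (u : Fin l → Bˣ) (t : Bˣ) :
    AddMonoidAlgebra ℤ ((Fin l → ℤ) × ℤ) →+* B :=
  (AddMonoidAlgebra.lift ℤ B ((Fin l → ℤ) × ℤ)
    { toFun := fun m => ((∏ i, u i ^ (m.toAdd.1 i)) * t ^ m.toAdd.2 : Bˣ)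
      map_one' := by simp
      map_mul' := by
        intro a b
        rw [← Units.val_mul]
        simp only [toAdd_mul, Prod.fst_add, Prod.snd_add, Pi.add_apply, zpow_add,
          Finset.prod_mul_distrib]
        congr 1
        exact mul_mul_mul_comm _ _ _ _ }).toRingHom

lemma evalT_single {l : ℕ} {B : Type*} [CommRing B] (u : Fin l → Bˣ) (t : Bˣ)
    (m : (Fin l → ℤ) × ℤ) : evalT u t (AddMonoidAlgebra.single m 1) =
      (((∏ i, u i ^ (m.1 i)) * t ^ m.2 : Bˣ) : B) := by
  simp [evalT]

lemma evalT_inl {l : ℕ} {B : Type*} [CommRing B] (u : Fin l → Bˣ) (t : Bˣ) :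
    (evalT u t).comp (AddMonoidAlgebra.mapDomainRingHom ℤ (AddMonoidHom.inl (Fin l → ℤ) ℤ))
      = evalAt u := by
  apply hom_ext_single
  intro m
  rw [RingHom.comp_apply, AddMonoidAlgebra.mapDomainRingHom_apply,
    AddMonoidAlgebra.mapDomain_single, evalT_single, evalAt_single]
  simp

lemma evalT_ev {l : ℕ} {B : Type*} [CommRing B] (u : Fin l → Bˣ) (t : Bˣ) (g : R (l + 2)) :
    evalT u t (ev (l + 2) g) =
      evalAt (Fin.snoc (Fin.snoc u t : Fin (l + 1) → Bˣ) t⁻¹ : Fin (l + 2) → Bˣ) g := by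
  have : (evalT u t).comp (ev (l + 2)) =
      evalAt (Fin.snoc (Fin.snoc u t : Fin (l + 1) → Bˣ) t⁻¹ : Fin (l + 2) → Bˣ) := by
    apply hom_ext_single
    intro m
    rw [RingHom.comp_apply, evalAt_single, Fin.prod_univ_castSucc, Fin.prod_univ_castSucc, ev,
      AddMonoidAlgebra.mapDomainRingHom_apply]
    erw [AddMonoidAlgebra.mapDomain_single]
    erw [evalT_single]
    congr 1
    simp only [Fin.snoc_castSucc, Fin.snoc_last]
    rw [mul_assoc, inv_zpow', ← zpow_add]
    simp only [evExp, AddMonoidHom.mk'_apply]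
    rw [dif_pos (by omega)]
    rfl
  exact DFunLike.congr_fun this g

lemma val_J {k : ℕ} {B : Type*} [CommRing B] {g : R k} (hg : g ∈ J k) (s : Multiset Bˣ)
    (hs : s.card + 2 = k) (t : Bˣ) : val g (t ::ₘ t⁻¹ ::ₘ s) = val g (1 ::ₘ 1 ::ₘ s) := by
  subst hs
  obtain ⟨hsym, hT⟩ := hg
  obtain ⟨h, hh⟩ := hT (by omega)
  obtain ⟨u, hu⟩ := exists_tuple s rfl
  have key : ∀ t : Bˣ, val g (t ::ₘ t⁻¹ ::ₘ s) = evalAt u h := by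
    intro t
    have h1 : t ::ₘ t⁻¹ ::ₘ s = (univ : Finset (Fin (s.card + 2))).val.map
        (Fin.snoc (Fin.snoc u t : Fin (s.card + 1) → Bˣ) t⁻¹ : Fin (s.card + 2) → Bˣ) := by
      rw [map_snoc, map_snoc, hu, Multiset.cons_swap]
    rw [h1, val_map hsym, ← evalT_ev, ← hh]
    exact DFunLike.congr_fun (evalT_inl u t) h
  have := key 1
  rw [inv_one] at this
  rw [key t, this]

lemma xu_injective {n : ℕ} : Function.Injective (fun i : Fin n => (xu i : R n)) := by
  intro i j h
  by_contra hij
  have h1 : (Pi.single i (1 : ℤ) : Fin n → ℤ) = Pi.single j 1 := by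
    by_contra hne
    have := congrArg (fun f : R n => f.coeff (Pi.single i 1)) h
    simp only [xu, AddMonoidAlgebra.coeff_single, Finsupp.single_apply] at this
    rw [if_neg (Ne.symm hne)] at this
    simp at this
  have := congrFun h1 i
  simp [hij] at this

/-- The substitution `x_i ↦ x_j`. -/
def sub {n : ℕ} (i j : Fin n) : R n →+* R n := evalAt (Function.update xu i (xu j))

lemma sub_xu {n : ℕ} (i j l : Fin n) :
    sub i j (xu l : R n) = xu (if l = i then j else l) := by
  rw [sub, evalAt_xu, Function.update_apply]
  split_ifs <;> rfl

lemma dvd_iff {n : ℕ} (i j : Fin n) (f : R n) :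
    ((xu j : R n) - xu i) ∣ f ↔ sub i j f = 0 := by
  constructor
  · rintro ⟨c, rfl⟩
    rw [map_mul, map_sub, sub_xu, sub_xu]
    by_cases h : j = i <;> simp [h]
  · intro h
    have key : (Ideal.Quotient.mk (Ideal.span {((xu j : R n) - xu i)})).comp (sub i j) =
        Ideal.Quotient.mk (Ideal.span {((xu j : R n) - xu i)}) := by
      apply hom_ext
      intro l
      rw [RingHom.comp_apply, sub_xu]
      split_ifs with hl
      · subst hl
        rw [Ideal.Quotient.mk_eq_mk_iff_sub_mem]
        exact Ideal.mem_span_singleton_self _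
      · rfl
    rw [← Ideal.mem_span_singleton, ← Ideal.Quotient.eq_zero_iff_mem, ← key, RingHom.comp_apply,
      h, map_zero]

lemma prime_sub {n : ℕ} {i j : Fin n} (h : i ≠ j) : Prime ((xu j : R n) - xu i) := by
  refine ⟨?_, ?_, ?_⟩
  · rw [sub_ne_zero]
    exact fun h' => h (xu_injective h').symm
  · intro hu
    have := (hu.dvd : _ ∣ (1 : R n))
    rw [dvd_iff, map_one] at this
    exact one_ne_zero this
  · intro a b hab
    simp only [dvd_iff, map_mul] at *
    exact mul_eq_zero.mp hab

lemma prod_dvd {ι M : Type*} [CommRing M] [IsDomain M] (s : Finset ι) (p : ι → M) (N : M)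
    (hp : ∀ i ∈ s, Prime (p i)) (hn : ∀ i ∈ s, p i ∣ N)
    (hij : ∀ i ∈ s, ∀ j ∈ s, i ≠ j → ¬ p i ∣ p j) : ∏ i ∈ s, p i ∣ N := by
  classical
  induction s using Finset.induction_on generalizing N with
  | empty => simp
  | insert a s ha ih =>
    rw [Finset.prod_insert ha]
    obtain ⟨c, rfl⟩ := hn a (mem_insert_self a s)
    refine mul_dvd_mul_left _ (ih c (fun i hi => hp i (mem_insert_of_mem hi)) ?_ ?_)
    · intro i hi
      refine ((hp i (mem_insert_of_mem hi)).dvd_or_dvd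
        (hn i (mem_insert_of_mem hi))).resolve_left ?_
      refine hij i (mem_insert_of_mem hi) a (mem_insert_self a s) ?_
      rintro rfl; exact ha hi
    · intro i hi j hj
      exact hij i (mem_insert_of_mem hi) j (mem_insert_of_mem hj)

/-- The Vandermonde product. -/
def vdm {n : ℕ} {B : Type*} [CommRing B] (v : Fin n → Bˣ) : B :=
  ∏ i, ∏ j ∈ Ioi i, ((v j : B) - v i)

lemma vdm_perm {n : ℕ} {B : Type*} [CommRing B] (v : Fin n → Bˣ) (w : Equiv.Perm (Fin n)) :
    vdm (v ∘ w) = ((Equiv.Perm.sign w : ℤ) : B) * vdm v := by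
  have h1 := Matrix.det_vandermonde (fun i => (v i : B))
  have h2 := Matrix.det_vandermonde (fun i => (v (w i) : B))
  have h3 := Matrix.det_permute w (Matrix.vandermonde (fun i => (v i : B)))
  rw [vdm, vdm, ← h1, ← h3]
  simp only [Function.comp]
  rw [← h2]
  rfl

lemma vdm_ne_zero {n : ℕ} {B : Type*} [CommRing B] [IsDomain B] (v : Fin n → Bˣ)
    (hv : Function.Injective v) : vdm v ≠ 0 := by
  refine Finset.prod_ne_zero_iff.mpr fun i _ => Finset.prod_ne_zero_iff.mpr fun j hj => ?_
  rw [sub_ne_zero]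
  intro h
  rw [Finset.mem_Ioi] at hj
  exact hj.ne' (hv (Units.ext h))

lemma vdm_dvd {n : ℕ} (N : R n)
    (hN : ∀ w : Equiv.Perm (Fin n), permHom w N = ((Equiv.Perm.sign w : ℤ) : R n) * N) :
    vdm (xu : Fin n → (R n)ˣ) ∣ N := by
  rw [vdm, Finset.prod_sigma']
  apply prod_dvd
  · rintro ⟨i, j⟩ h
    simp only [mem_sigma, mem_univ, mem_Ioi, true_and] at h
    exact prime_sub h.ne
  · rintro ⟨i, j⟩ h
    simp only [mem_sigma, mem_univ, mem_Ioi, true_and] at h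
    rw [dvd_iff]
    have h1 : (sub i j).comp (permHom (Equiv.swap i j)) = sub i j := by
      apply hom_ext
      intro l
      rw [RingHom.comp_apply, permHom_xu, sub_xu, sub_xu]
      congr 2
      rw [Equiv.swap_apply_def]
      split_ifs <;> simp_all
    have h2 := DFunLike.congr_fun h1 N
    rw [RingHom.comp_apply, hN, Equiv.Perm.sign_swap h.ne] at h2
    simp only [Units.val_neg, Units.val_one, Int.cast_neg, Int.cast_one, map_mul, map_neg,
      map_one] at h2
    have h3 : (2 : R n) * sub i j N = 0 := by linear_combination -h2
    refine (mul_eq_zero.mp h3).resolve_left ?_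
    intro h4
    have := congrArg (evalAt (fun _ : Fin n => (1 : ℤˣ))) h4
    rw [map_ofNat, map_zero] at this
    exact two_ne_zero this
  · rintro ⟨i, j⟩ h ⟨i', j'⟩ h' hne
    simp only [mem_sigma, mem_univ, mem_Ioi, true_and] at h h'
    rw [dvd_iff, map_sub, sub_xu, sub_xu, sub_eq_zero]
    intro h3
    have := xu_injective h3
    apply hne
    grind

/-- The combinatorial sign. -/
def cf {n : ℕ} (I : Finset (Fin n)) : ℤ :=
  if Even I.card ∧ 2 ≤ I.card then (-1) ^ (I.card / 2 + 1) else 0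

/-- The multiset of values. -/
def ms {n : ℕ} {B : Type*} [CommRing B] (v : Fin n → Bˣ) (I : Finset (Fin n)) : Multiset Bˣ :=
  (univ \ I).val.map v + Multiset.replicate (I.card - 2) 1

/-- Numerator product. -/
def cp {n : ℕ} {B : Type*} [CommRing B] (v : Fin n → Bˣ) (I : Finset (Fin n)) : B :=
  ∏ i ∈ univ \ I, ∏ j ∈ I, (1 - (v i : B) * v j)

/-- Denominator product. -/
def ep {n : ℕ} {B : Type*} [CommRing B] (v : Fin n → Bˣ) (I : Finset (Fin n)) : B :=
  ∏ i ∈ univ \ I, ∏ j ∈ I, ((v j : B) - v i)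

/-- Complementary factor of the Vandermonde product. -/
def dp {n : ℕ} {B : Type*} [CommRing B] (v : Fin n → Bˣ) (I : Finset (Fin n)) : B :=
  ∏ i, ∏ j ∈ Ioi i, (if i ∈ I then (if j ∈ I then (v j : B) - v i else -1)
    else if j ∈ I then 1 else (v j : B) - v i)

lemma dp_mul_ep {n : ℕ} {B : Type*} [CommRing B] (v : Fin n → Bˣ) (I : Finset (Fin n)) :
    dp v I * ep v I = vdm v := by
  let h : Fin n → Fin n → B := fun j i => if i ∉ I ∧ j ∈ I then (v j : B) - v i else 1
  have h1 : ep v I = ∏ i, ∏ j ∈ Ioi i, h j i * h i j := by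
    rw [Finset.prod_prod_Ioi_mul_eq_prod_prod_off_diag h, ep,
      ← Finset.prod_subset (Finset.subset_univ (univ \ I))]
    · refine Finset.prod_congr rfl fun i hi => ?_
      simp only [mem_sdiff, mem_univ, true_and] at hi
      have hs : I ⊆ ({i}ᶜ : Finset (Fin n)) := by
        intro j hj
        simp only [mem_compl, mem_singleton]
        rintro rfl; exact hi hj
      rw [← Finset.prod_subset hs]
      · refine Finset.prod_congr rfl fun j hj => ?_
        simp [h, hi, hj]
      · intro j _ hj
        simp [h, hj]
    · intro i _ hi
      simp only [mem_sdiff, mem_univ, true_and, not_not] at hi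
      exact Finset.prod_eq_one fun j _ => by simp [h, hi]
  rw [h1, dp, vdm, ← Finset.prod_mul_distrib]
  refine Finset.prod_congr rfl fun i _ => ?_
  rw [← Finset.prod_mul_distrib]
  refine Finset.prod_congr rfl fun j _ => ?_
  by_cases hi : i ∈ I <;> by_cases hj : j ∈ I <;> simp [h, hi, hj]

/-- The numerator. -/
def num {k n : ℕ} {B : Type*} [CommRing B] (g : R k) (v : Fin n → Bˣ) : B :=
  ∑ I : Finset (Fin n), (cf I : B) * (val g (ms v I) * cp v I * dp v I)

lemma card_ms {k : ℕ} {B : Type*} [CommRing B] (v : Fin (k + 2) → Bˣ)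
    (I : Finset (Fin (k + 2))) (hI : 2 ≤ I.card) : (ms v I).card = k := by
  have h1 : (univ \ I).card = k + 2 - I.card := by
    rw [Finset.card_sdiff_of_subset (subset_univ _)]; simp
  have h2 := Finset.card_le_univ I
  simp only [Fintype.card_fin] at h2
  rw [ms, Multiset.card_add, Multiset.card_map, Multiset.card_replicate]
  change (univ \ I).card + _ = _
  omega

lemma hom_vdm {n : ℕ} {B C : Type*} [CommRing B] [CommRing C] (φ : B →+* C) (v : Fin n → Bˣ) :
    φ (vdm v) = vdm (fun i => Units.map (φ : B →* C) (v i)) := by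
  simp [vdm, map_prod]

lemma hom_num {k : ℕ} {B C : Type*} [CommRing B] [CommRing C] {g : R k} (hg : SymmP g)
    (φ : B →+* C) (v : Fin (k + 2) → Bˣ) :
    φ (num g v) = num g (fun i => Units.map (φ : B →* C) (v i)) := by
  rw [num, num, map_sum]
  refine Finset.sum_congr rfl fun I _ => ?_
  by_cases hI : 2 ≤ I.card
  · rw [map_mul, map_mul, map_mul, map_intCast, hom_val hg _ _ (card_ms v I hI)]
    congr 1
    congr 1
    · congr 1
      · simp [ms, Multiset.map_map]
      · simp [cp, map_prod]
    · simp [dp, map_prod, apply_ite φ]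
  · have : cf I = 0 := by simp [cf, hI]
    simp [this]

lemma prod_perm {n : ℕ} {B : Type*} [CommRing B] (F : Fin n → Fin n → B)
    (w : Equiv.Perm (Fin n)) (I : Finset (Fin n)) :
    ∏ i ∈ univ \ I, ∏ j ∈ I, F (w i) (w j) =
      ∏ i ∈ univ \ I.map w.toEmbedding, ∏ j ∈ I.map w.toEmbedding, F i j := by
  have : univ \ I.map w.toEmbedding = (univ \ I).map w.toEmbedding := by
    ext i; simp
  rw [this, Finset.prod_map]
  simp [Finset.prod_map]

lemma num_perm {k n : ℕ} {B : Type*} [CommRing B] [IsDomain B] (g : R k) (v : Fin n → Bˣ)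
    (hv : Function.Injective v) (w : Equiv.Perm (Fin n)) :
    num g (v ∘ w) = ((Equiv.Perm.sign w : ℤ) : B) * num g v := by
  rw [num, num, Finset.mul_sum, ← Equiv.sum_comp (Equiv.finsetCongr w)
    (fun I => ((Equiv.Perm.sign w : ℤ) : B) * ((cf I : B) * (val g (ms v I) * cp v I * dp v I)))]
  refine Finset.sum_congr rfl fun I _ => ?_
  rw [Equiv.finsetCongr_apply]
  have h1 : cf (I.map w.toEmbedding) = cf I := by simp [cf]
  have h2 : ms v (I.map w.toEmbedding) = ms (v ∘ w) I := by
    have : univ \ I.map w.toEmbedding = (univ \ I).map w.toEmbedding := by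
      ext i; simp
    rw [ms, ms, this, Finset.map_val, Multiset.map_map, Finset.card_map]
    rfl
  have h3 : cp v (I.map w.toEmbedding) = cp (v ∘ w) I :=
    (prod_perm (fun i j => 1 - (v i : B) * v j) w I).symm
  have h4 : ep v (I.map w.toEmbedding) = ep (v ∘ w) I :=
    (prod_perm (fun i j => (v j : B) - v i) w I).symm
  have h5 : dp (v ∘ w) I = ((Equiv.Perm.sign w : ℤ) : B) * dp v (I.map w.toEmbedding) := by
    have h6 := dp_mul_ep (v ∘ w) I
    have h7 := dp_mul_ep v (I.map w.toEmbedding)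
    have h8 := vdm_perm v w
    rw [← h6, ← h7, h4, ← mul_assoc] at h8
    refine mul_right_cancel₀ ?_ h8
    intro h0
    rw [h0, mul_zero] at h6
    exact vdm_ne_zero _ (hv.comp w.injective) h6.symm
  rw [h1, h2, h3, h5]
  ring

lemma ratio_one {K : Type*} [Field K] {x y z : K} (hxy : x * y = 1) (hx : z ≠ x) (hy : z ≠ y) :
    (1 - x * z) / (z - x) * ((1 - y * z) / (z - y)) = 1 := by
  have h1 : z - x ≠ 0 := sub_ne_zero.mpr hx
  have h2 : z - y ≠ 0 := sub_ne_zero.mpr hy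
  rw [div_mul_div_comm, div_eq_one_iff_eq (mul_ne_zero h1 h2)]
  linear_combination (z ^ 2 - 1) * hxy

lemma cf_ab {n : ℕ} {a b : Fin n} (hab : a ≠ b) (I : Finset (Fin n)) (ha : a ∉ I) (hb : b ∉ I)
    (hI : I.Nonempty) : cf (insert a (insert b I)) = - cf I := by
  have hc : (insert a (insert b I)).card = I.card + 2 := by
    rw [Finset.card_insert_of_notMem (by simp [hab, ha]), Finset.card_insert_of_notMem hb]
  have h0 : 0 < I.card := hI.card_pos
  rw [cf, cf, hc]
  by_cases he : Even I.card
  · have h2 : 2 ≤ I.card := by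
      obtain ⟨c, hc⟩ := he
      omega
    rw [if_pos ⟨he.add even_two, by omega⟩, if_pos ⟨he, h2⟩]
    have : (I.card + 2) / 2 + 1 = (I.card / 2 + 1) + 1 := by omega
    rw [this, pow_succ]; ring
  · have : ¬ Even (I.card + 2) := by
      rw [Nat.even_add]; simp [he]
    simp [he, this]

lemma main_sum {k : ℕ} {K : Type*} [Field K] {g : R k} (hg : g ∈ J k)
    (v : Fin (k + 2) → Kˣ) (hv : Function.Injective v) {a b : Fin (k + 2)} (hab : a ≠ b)
    (hvab : v a * v b = 1) (W : Finset (Fin (k + 2))) (haW : a ∉ W) (hbW : b ∉ W)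
    (hW : univ = insert a (insert b W)) :
    num g v = vdm v * val g (W.val.map v) := by
  have hvd := vdm_ne_zero v hv
  have hvK : ((v a : K)) * v b = 1 := by rw [← Units.val_mul, hvab, Units.val_one]
  have hinj : ∀ {i j}, i ≠ j → (v i : K) ≠ v j := fun h h' => h (hv (Units.ext h'))
  let r : Fin (k + 2) → Fin (k + 2) → K := fun i j => (1 - (v i : K) * v j) / ((v j : K) - v i)
  let q : Finset (Fin (k + 2)) → K := fun I => ∏ i ∈ univ \ I, ∏ j ∈ I, r i j
  let F : Finset (Fin (k + 2)) → K := fun I => (cf I : K) * (val g (ms v I) * q I)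
  have hq : ∀ I, cp v I * dp v I = vdm v * q I := by
    intro I
    have h1 : q I = cp v I / ep v I := by
      simp only [q, r, cp, ep, Finset.prod_div_distrib]
    have h2 := dp_mul_ep v I
    have h3 : ep v I ≠ 0 := by
      intro h; rw [h, mul_zero] at h2; exact hvd h2.symm
    rw [h1, ← h2]; field_simp
  have hsum : num g v = vdm v * ∑ I, F I := by
    rw [num, Finset.mul_sum]
    refine Finset.sum_congr rfl fun I _ => ?_
    simp only [F]
    rw [mul_assoc (val g (ms v I)), hq]; ring
  rw [hsum]
  congr 1
  have hbi : a ∉ insert b W := by simp [hab, haW]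
  rw [← Finset.powerset_univ, hW, Finset.sum_powerset_insert hbi, Finset.sum_powerset_insert hbW,
    Finset.sum_powerset_insert hbW]
  have hza : ∀ I ∈ W.powerset, F (insert a I) = 0 := by
    intro I hI
    rw [mem_powerset] at hI
    have : q (insert a I) = 0 := by
      refine Finset.prod_eq_zero (i := b) ?_ (Finset.prod_eq_zero (mem_insert_self a I) ?_)
      · simp only [mem_sdiff, mem_univ, true_and, mem_insert, not_or]
        exact ⟨hab.symm, fun h => hbW (hI h)⟩
      · simp only [r]; rw [mul_comm, hvK]; simp
    simp only [F, this, mul_zero]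
  have hzb : ∀ I ∈ W.powerset, F (insert b I) = 0 := by
    intro I hI
    rw [mem_powerset] at hI
    have : q (insert b I) = 0 := by
      refine Finset.prod_eq_zero (i := a) ?_ (Finset.prod_eq_zero (mem_insert_self b I) ?_)
      · simp only [mem_sdiff, mem_univ, true_and, mem_insert, not_or]
        exact ⟨hab, fun h => haW (hI h)⟩
      · simp only [r]; rw [hvK]; simp
    simp only [F, this, mul_zero]
  rw [Finset.sum_eq_zero hza, Finset.sum_eq_zero hzb, add_zero, zero_add,
    ← Finset.sum_add_distrib, Finset.sum_eq_single_of_mem ∅ (empty_mem_powerset W)]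
  · have e1 : cf (∅ : Finset (Fin (k + 2))) = 0 := by simp [cf]
    have e2 : cf (insert a (insert b (∅ : Finset (Fin (k + 2))))) = 1 := by
      have : (insert a (insert b (∅ : Finset (Fin (k + 2))))).card = 2 := by
        simpa using Finset.card_pair hab
      rw [cf, this]; simp
    have hco : univ \ (insert a (insert b (∅ : Finset (Fin (k + 2))))) = W := by
      rw [hW]; ext i; simp only [mem_sdiff, mem_insert, notMem_empty]
      grind
    have e3 : ms v (insert a (insert b (∅ : Finset (Fin (k + 2))))) = W.val.map v := by
      have : (insert a (insert b (∅ : Finset (Fin (k + 2))))).card = 2 := by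
        simpa using Finset.card_pair hab
      rw [ms, hco, this]; simp
    have e4 : q (insert a (insert b (∅ : Finset (Fin (k + 2))))) = 1 := by
      simp only [q]
      rw [hco]
      refine Finset.prod_eq_one fun i hi => ?_
      have hia : i ≠ a := by rintro rfl; exact haW hi
      have hib : i ≠ b := by rintro rfl; exact hbW hi
      rw [Finset.prod_insert (by simp [hab])]
      simp only [insert_empty_eq, prod_singleton, r]
      have := ratio_one hvK (hinj hia) (hinj hib)
      refine Eq.trans ?_ this
      rw [← neg_sub (v i : K) (v a), ← neg_sub (v i : K) (v b), div_neg, div_neg,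
        neg_mul_neg, mul_comm (v i : K), mul_comm (v i : K)]
    simp only [F, e1, e2, e3, e4]; simp
  · intro I hI hne
    rw [mem_powerset] at hI
    have hIne : I.Nonempty := Finset.nonempty_iff_ne_empty.mpr hne
    have haI : a ∉ I := fun h => haW (hI h)
    have hbI : b ∉ I := fun h => hbW (hI h)
    by_cases hc : Even I.card ∧ 2 ≤ I.card
    swap
    · have h1 : cf I = 0 := by simp only [cf, if_neg hc]
      simp only [F, cf_ab hab I haI hbI hIne, h1]; simp
    have hcard : (insert a (insert b I)).card = I.card + 2 := by
      rw [Finset.card_insert_of_notMem (by simp [hab, haI]), Finset.card_insert_of_notMem hbI]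
    have hco : univ \ (insert a (insert b I)) = W \ I := by
      rw [hW]; ext i; simp only [mem_sdiff, mem_insert]
      grind
    have hco' : univ \ I = insert a (insert b (W \ I)) := by
      rw [hW]; ext i; simp only [mem_sdiff, mem_insert]
      grind
    have haWI : a ∉ insert b (W \ I) := by simp [hab, haW]
    have hbWI : b ∉ W \ I := by simp [hbW]
    have hq1 : q I = ∏ i ∈ W \ I, ∏ j ∈ I, r i j := by
      simp only [q]
      rw [hco', Finset.prod_insert haWI, Finset.prod_insert hbWI, ← mul_assoc,
        ← Finset.prod_mul_distrib]
      rw [Finset.prod_eq_one, one_mul]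
      intro j hj
      have hja : j ≠ a := by rintro rfl; exact haI hj
      have hjb : j ≠ b := by rintro rfl; exact hbI hj
      exact ratio_one hvK (hinj hja) (hinj hjb)
    have hq2 : q (insert a (insert b I)) = ∏ i ∈ W \ I, ∏ j ∈ I, r i j := by
      simp only [q]
      rw [hco]
      refine Finset.prod_congr rfl fun i hi => ?_
      have hiW := (mem_sdiff.mp hi).1
      have hia : i ≠ a := by rintro rfl; exact haW hiW
      have hib : i ≠ b := by rintro rfl; exact hbW hiW
      rw [Finset.prod_insert (by simp [hab, haI]), Finset.prod_insert hbI, ← mul_assoc]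
      have h1 : r i a * r i b = 1 := by
        simp only [r]
        have := ratio_one hvK (hinj hia) (hinj hib)
        refine Eq.trans ?_ this
        rw [← neg_sub (v i : K) (v a), ← neg_sub (v i : K) (v b), div_neg, div_neg,
          neg_mul_neg, mul_comm (v i : K), mul_comm (v i : K)]
      rw [h1, one_mul]
    have hm : val g (ms v I) = val g (ms v (insert a (insert b I))) := by
      set s := (W \ I).val.map v + Multiset.replicate (I.card - 2) 1 with hs
      have m1 : ms v I = v a ::ₘ (v a)⁻¹ ::ₘ s := by
        rw [ms, hco', Finset.insert_val_of_notMem haWI, Finset.insert_val_of_notMem hbWI,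
          Multiset.map_cons, Multiset.map_cons, Multiset.cons_add, Multiset.cons_add, ← hs,
          eq_inv_of_mul_eq_one_right hvab]
      have m2 : ms v (insert a (insert b I)) = 1 ::ₘ 1 ::ₘ s := by
        have : I.card = I.card - 2 + 1 + 1 := by omega
        rw [ms, hco, hcard, Nat.add_sub_cancel, this, Multiset.replicate_succ,
          Multiset.replicate_succ, Multiset.add_cons, Multiset.add_cons, ← hs]
      have m3 := card_ms v I hc.2
      rw [m1, Multiset.card_cons, Multiset.card_cons] at m3
      rw [m1, m2]
      exact val_J hg s m3 (v a)
    simp only [F, cf_ab hab I haI hbI hIne, hq1, hq2, hm]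
    push_cast; ring

lemma main {k : ℕ} (g : R k) (hg : g ∈ J k) :
    ∃ f : R (k + 2), SymmP f ∧ ev (k + 2) f =
      AddMonoidAlgebra.mapDomainRingHom ℤ (AddMonoidHom.inl (Fin k → ℤ) ℤ) g := by
  have hxi : Function.Injective (xu : Fin (k + 2) → (R (k + 2))ˣ) := by
    intro i j h
    exact xu_injective (congrArg Units.val h)
  have hperm : ∀ w : Equiv.Perm (Fin (k + 2)),
      (fun i => Units.map (permHom w : R (k + 2) →* R (k + 2)) (xu i)) = xu ∘ w := by
    intro w; funext i; ext : 1; exact permHom_xu w i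
  have hN : ∀ w : Equiv.Perm (Fin (k + 2)),
      permHom w (num g xu) = ((Equiv.Perm.sign w : ℤ) : R (k + 2)) * num g xu := by
    intro w
    rw [hom_num hg.1, hperm, num_perm g xu hxi]
  obtain ⟨f, hf⟩ := vdm_dvd (num g xu) hN
  have hx0 := vdm_ne_zero _ hxi
  refine ⟨f, ?_, ?_⟩
  · intro w
    have h1 := hN w
    rw [hf, map_mul, hom_vdm, hperm, vdm_perm, mul_assoc] at h1
    have hs : ((Equiv.Perm.sign w : ℤ) : R (k + 2)) ≠ 0 := by
      rcases Int.units_eq_one_or (Equiv.Perm.sign w) with h | h <;> simp [h]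
    exact mul_left_cancel₀ hx0 (mul_left_cancel₀ hs h1)
  · let S := AddMonoidAlgebra ℤ ((Fin k → ℤ) × ℤ)
    let K := FractionRing S
    let evk : R (k + 2) →+* S := ev (k + 2)
    let φ : R (k + 2) →+* K := (algebraMap S K).comp evk
    have hSK : Function.Injective (algebraMap S K) := IsFractionRing.injective S K
    let v : Fin (k + 2) → Kˣ := fun i => Units.map (φ : R (k + 2) →* K) (xu i)
    let z : Fin (k + 2) → (Fin k → ℤ) × ℤ := fun i => evExp (k + 2) (Pi.single i 1)
    have hz : ∀ i, evk (xu i : R (k + 2)) = AddMonoidAlgebra.single (z i) 1 := by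
      intro i
      exact AddMonoidAlgebra.mapDomain_single
    have hzf : ∀ i, z i = (fun l : Fin k => (Pi.single i 1 : Fin (k + 2) → ℤ) l.castSucc.castSucc,
        (Pi.single i 1 : Fin (k + 2) → ℤ) (Fin.last k).castSucc -
          (Pi.single i 1 : Fin (k + 2) → ℤ) (Fin.last (k + 1))) := by
      intro i
      refine Prod.ext rfl ?_
      simp only [z, evExp, AddMonoidHom.mk'_apply]
      rw [dif_pos (by omega)]
      rfl
    have hz1 : ∀ (i : Fin k), z i.castSucc.castSucc = (Pi.single i 1, 0) := by
      intro i
      rw [hzf]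
      refine Prod.ext ?_ ?_
      · funext l
        simp [Pi.single_apply]
      · simp [Pi.single_apply, Fin.ext_iff]; omega
    have hza : z (Fin.last k).castSucc = (0, 1) := by
      rw [hzf]
      refine Prod.ext ?_ ?_
      · funext l
        simp [Pi.single_apply]
      · simp [Pi.single_apply, Fin.ext_iff]
    have hzb : z (Fin.last (k + 1)) = (0, -1) := by
      rw [hzf]
      refine Prod.ext ?_ ?_
      · funext l
        simp [Pi.single_apply]
      · simp [Pi.single_apply, Fin.ext_iff]
    have hcases : ∀ i : Fin (k + 2), i = (Fin.last k).castSucc ∨ i = Fin.last (k + 1) ∨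
        ∃ l : Fin k, l.castSucc.castSucc = i := by
      intro i
      refine Fin.lastCases (Or.inr (Or.inl rfl)) (fun i => ?_) i
      exact Fin.lastCases (Or.inl rfl) (fun i => Or.inr (Or.inr ⟨i, rfl⟩)) i
    have hzinj : Function.Injective z := by
      intro i j h
      rcases hcases i with rfl | rfl | ⟨l, rfl⟩ <;> rcases hcases j with rfl | rfl | ⟨m, rfl⟩ <;>
        simp only [hz1, hza, hzb, Prod.mk.injEq] at h
      · rfl
      · exact absurd h.2 (by norm_num)
      · exact absurd h.2 (by norm_num)
      · exact absurd h.2 (by norm_num)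
      · rfl
      · exact absurd h.2 (by norm_num)
      · exact absurd h.2 (by norm_num)
      · exact absurd h.2 (by norm_num)
      · have h1 := congrFun h.1 l
        by_contra hne
        have hlm : l ≠ m := by rintro rfl; exact hne rfl
        simp [hlm] at h1
    have hv : Function.Injective v := by
      intro i j h
      have h1 : evk (xu i : R (k + 2)) = evk (xu j : R (k + 2)) := hSK (congrArg Units.val h)
      rw [hz, hz] at h1
      apply hzinj
      exact (AddMonoidAlgebra.single_left_injective one_ne_zero) h1
    let a : Fin (k + 2) := (Fin.last k).castSucc
    let b : Fin (k + 2) := Fin.last (k + 1)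
    have hab : a ≠ b := (Fin.castSucc_lt_last _).ne
    have hvab : v a * v b = 1 := by
      ext
      change algebraMap S K (evk (xu a)) * algebraMap S K (evk (xu b)) = 1
      rw [← map_mul, hz, hz, hza, hzb, AddMonoidAlgebra.single_mul_single]
      simp only [Prod.mk_add_mk, add_zero, add_neg_cancel, mul_one]
      exact map_one (algebraMap S K)
    let W : Finset (Fin (k + 2)) :=
      (univ : Finset (Fin k)).map (Fin.castSuccEmb.trans Fin.castSuccEmb)
    have hmain := main_sum hg v hv hab hvab W (by simp [W, a]) (by simp [W, b]) (by
      ext i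
      simp only [W, a, b, mem_univ, mem_insert, mem_map, true_and, true_iff]
      refine Fin.lastCases (Or.inr (Or.inl rfl)) (fun i => ?_) i
      refine Fin.lastCases (Or.inl rfl) (fun i => Or.inr (Or.inr ⟨i, rfl⟩)) i)
    have h1 : φ (num g xu) = num g v := hom_num hg.1 φ xu
    have h2 : φ (vdm xu) = vdm v := hom_vdm φ xu
    rw [← h1, hf, map_mul, h2] at hmain
    have h3 := mul_left_cancel₀ (vdm_ne_zero v hv) hmain
    apply hSK
    change φ f = _
    rw [h3]
    have h4 : W.val.map v = (univ : Finset (Fin k)).val.map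
        (fun i => v i.castSucc.castSucc) := by
      simp only [W, Finset.map_val, Multiset.map_map]; rfl
    rw [h4, val_map hg.1]
    have h5 : evalAt (fun i : Fin k => v i.castSucc.castSucc) = (algebraMap S K).comp
        (AddMonoidAlgebra.mapDomainRingHom ℤ (AddMonoidHom.inl (Fin k → ℤ) ℤ)) := by
      apply hom_ext
      intro i
      rw [evalAt_xu]
      change algebraMap S K (evk _) = _
      rw [hz, hz1, RingHom.comp_apply]
      congr 1
      rw [xu, AddMonoidAlgebra.mapDomainRingHom_apply, AddMonoidAlgebra.mapDomain_single]
      rfl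
    rw [h5]; rfl

lemma ds_of_ev {k : ℕ} (f : R (k + 2)) (g : R k) (h : ev (k + 2) f =
      AddMonoidAlgebra.mapDomainRingHom ℤ (AddMonoidHom.inl (Fin k → ℤ) ℤ) g) :
    ds (k + 2) f = g := by
  let ρ : AddMonoidAlgebra ℤ ((Fin k → ℤ) × ℤ) →+* R k :=
    AddMonoidAlgebra.mapDomainRingHom ℤ (AddMonoidHom.fst (Fin k → ℤ) ℤ)
  have h1 : ρ.comp (ev (k + 2)) = ds (k + 2) := by
    apply hom_ext_single
    intro m
    simp only [ρ, ev, ds, RingHom.comp_apply, AddMonoidAlgebra.mapDomainRingHom_apply]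
    erw [AddMonoidAlgebra.mapDomain_single, AddMonoidAlgebra.mapDomain_single,
      AddMonoidAlgebra.mapDomain_single]
    rfl
  have h2 : ρ.comp (AddMonoidAlgebra.mapDomainRingHom ℤ (AddMonoidHom.inl (Fin k → ℤ) ℤ)) =
      RingHom.id _ := by
    apply hom_ext_single
    intro m
    simp [ρ, AddMonoidAlgebra.mapDomainRingHom_apply]
  have h3 := DFunLike.congr_fun h1 f
  rw [RingHom.comp_apply, h] at h3
  rw [← h3]
  exact DFunLike.congr_fun h2 g

end DSaux

/-- For every `n ≥ 2`, the map `dsₙ : Jₙ → J_{n-2}` is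
surjective: every `g ∈ J_{n-2}` is `dsₙ f` for some `f ∈ Jₙ`. -/
theorem ds_surjective (n : ℕ) (hn : 2 ≤ n) :
    ∀ g ∈ J (n - 2), ∃ f ∈ J n, ds n f = g := by
  obtain ⟨k, rfl⟩ : ∃ k, n = k + 2 := ⟨n - 2, by omega⟩
  intro g hg
  obtain ⟨f, hf, hev⟩ := DSaux.main (k := k) g hg
  exact ⟨f, ⟨hf, fun _ => ⟨g, hev.symm⟩⟩, DSaux.ds_of_ev f g hev⟩

end
end

section
/- Let n ≥ 2 and let f ∈ R_n^{S_n} be a symmetric Laurent polynomial that is divisible in R_n by 1 − x_{n−1} x_n. Then f is divisible in R_n by ∏_{1 ≤ i < j ≤ n} (1 − x_i x_j), and the quotient g with f = (∏_{1 ≤ i < j ≤ n} (1 − x_i x_j)) · g is again a symmetric Laurent polynomial, g ∈ R_n^{S_n}. -/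
/-!
Common setup: `R n` is the ring of Laurent polynomials
`ℤ[x₁^{±1}, …, xₙ^{±1}]`, realized as the group algebra over `ℤ` of the
group `ℤ^n` of exponent vectors (`AddMonoidAlgebra ℤ (Fin n → ℤ)`).
-/

noncomputable section

/-- Exponent map of `x_j ↦ x_i⁻¹`. -/
def phiExp {n : ℕ} (i j : Fin n) : (Fin n → ℤ) →+ (Fin n → ℤ) :=
  AddMonoidHom.mk' (fun m => m - m j • (Pi.single i (1 : ℤ) + Pi.single j (1 : ℤ)))
    (by intro a b; simp only [Pi.add_apply, add_smul]; abel)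

/-- The substitution `x_j ↦ x_i⁻¹`. -/
def phi {n : ℕ} (i j : Fin n) : R n →+* R n :=
  AddMonoidAlgebra.mapDomainRingHom ℤ (phiExp i j)

lemma map_single_ring {n : ℕ} (e : (Fin n → ℤ) →+ (Fin n → ℤ)) (m : Fin n → ℤ) (c : ℤ) :
    AddMonoidAlgebra.mapDomainRingHom ℤ e (AddMonoidAlgebra.single m c : R n)
      = AddMonoidAlgebra.single (e m) c := by
  simp

lemma XX {n : ℕ} (i j : Fin n) :
    (X i * X j : R n) = AddMonoidAlgebra.single (Pi.single i (1 : ℤ) + Pi.single j (1 : ℤ)) 1 := by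
  simp [X, AddMonoidAlgebra.single_mul_single]

lemma permHom_X {n : ℕ} (w : Equiv.Perm (Fin n)) (i : Fin n) : permHom w (X i) = X (w i) := by
  unfold permHom X
  rw [map_single_ring]
  congr 1
  ext k
  simp only [permExp, AddMonoidHom.mk'_apply, Function.comp_apply, Pi.single_apply]
  simp [Equiv.symm_apply_eq]

lemma permHom_fac {n : ℕ} (w : Equiv.Perm (Fin n)) (i j : Fin n) :
    permHom w (1 - X i * X j) = 1 - X (w i) * X (w j) := by
  rw [map_sub, map_mul, map_one, permHom_X, permHom_X]

lemma phi_fac {n : ℕ} (i j : Fin n) (h : i ≠ j) : phi i j (1 - X i * X j) = 0 := by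
  rw [map_sub, map_one, XX, phi, map_single_ring]
  have : phiExp i j (Pi.single i (1 : ℤ) + Pi.single j (1 : ℤ)) = 0 := by
    simp [phiExp, h.symm]
  rw [this, AddMonoidAlgebra.one_def, sub_self]

lemma phi_fac_ne {n : ℕ} (i j k l : Fin n) (h : i < j) (h' : k < l) (hne : (k, l) ≠ (i, j)) :
    phi i j (1 - X k * X l) ≠ 0 := by
  rw [map_sub, map_one, XX, phi, map_single_ring, AddMonoidAlgebra.one_def, sub_ne_zero]
  intro hE
  have hE' : (0 : Fin n → ℤ) = phiExp i j (Pi.single k (1 : ℤ) + Pi.single l (1 : ℤ)) := by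
    have := (AddMonoidAlgebra.single_left_injective (R := ℤ) (one_ne_zero)) hE
    exact this
  simp only [phiExp, AddMonoidHom.mk'_apply] at hE'
  have hk := congrFun hE' k
  have hl := congrFun hE' l
  simp only [Pi.zero_apply, Pi.sub_apply, Pi.add_apply, Pi.smul_apply, Pi.single_apply,
    smul_eq_mul] at hk hl
  apply hne
  rw [Prod.mk.injEq]
  grind

lemma dvd_single_sub {n : ℕ} (v : Fin n → ℤ) (c : ℤ) :
    (1 - AddMonoidAlgebra.single v 1 : R n) ∣ AddMonoidAlgebra.single (c • v) 1 - 1 := by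
  have nat : ∀ c : ℕ, (1 - AddMonoidAlgebra.single v 1 : R n) ∣
      1 - AddMonoidAlgebra.single ((c : ℤ) • v) 1 := by
    intro c
    have := one_sub_dvd_one_sub_pow (AddMonoidAlgebra.single v 1 : R n) c
    rw [AddMonoidAlgebra.single_pow] at this
    simpa using this
  obtain ⟨k, rfl | rfl⟩ := c.eq_nat_or_neg
  · exact (dvd_sub_comm).1 (nat k)
  · have : (AddMonoidAlgebra.single (-(k : ℤ) • v) 1 - 1 : R n) =
        AddMonoidAlgebra.single (-(k : ℤ) • v) 1 * (1 - AddMonoidAlgebra.single ((k : ℤ) • v) 1) := by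
      rw [mul_sub, AddMonoidAlgebra.single_mul_single, AddMonoidAlgebra.one_def]
      simp [AddMonoidAlgebra.single_mul_single]
    rw [this]
    exact (nat k).mul_left _

lemma dvd_sub_phi {n : ℕ} (i j : Fin n) (f : R n) : (1 - X i * X j) ∣ f - phi i j f := by
  induction f using AddMonoidAlgebra.induction_linear with
  | zero => simp
  | add f g hf hg =>
    rw [map_add, add_sub_add_comm]; exact dvd_add hf hg
  | single m c =>
    rw [phi, map_single_ring, XX]
    set v : Fin n → ℤ := Pi.single i (1 : ℤ) + Pi.single j (1 : ℤ) with hv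
    have : (AddMonoidAlgebra.single m c - AddMonoidAlgebra.single (phiExp i j m) c : R n) =
        AddMonoidAlgebra.single (phiExp i j m) c * (AddMonoidAlgebra.single (m j • v) 1 - 1) := by
      rw [mul_sub, AddMonoidAlgebra.single_mul_single, mul_one, mul_one]
      congr 2
      simp [phiExp, hv]
    rw [this]
    exact (dvd_single_sub v _).mul_left _

lemma dvd_iff_phi {n : ℕ} (i j : Fin n) (h : i ≠ j) (f : R n) :
    (1 - X i * X j) ∣ f ↔ phi i j f = 0 := by
  constructor
  · rintro ⟨g, rfl⟩
    rw [map_mul, phi_fac i j h, zero_mul]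
  · intro h0
    have := dvd_sub_phi i j f
    rwa [h0, sub_zero] at this

lemma prod_dvd_aux {n : ℕ} (f : R n) (s : Finset (Fin n × Fin n)) :
    (∀ p ∈ s, p.1 < p.2) → (∀ p ∈ s, (1 - X p.1 * X p.2) ∣ f) →
    (∏ p ∈ s, (1 - X p.1 * X p.2)) ∣ f := by
  classical
  induction s using Finset.induction_on with
  | empty => simp
  | insert p s hp ih =>
    intro h1 h2
    obtain ⟨g, hg⟩ := ih (fun q hq => h1 q (Finset.mem_insert_of_mem hq))
      (fun q hq => h2 q (Finset.mem_insert_of_mem hq))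
    have hlt := h1 p (Finset.mem_insert_self _ _)
    have h0 := (dvd_iff_phi p.1 p.2 hlt.ne f).1 (h2 p (Finset.mem_insert_self _ _))
    rw [hg, map_mul, map_prod] at h0
    have hne : ∏ q ∈ s, phi p.1 p.2 (1 - X q.1 * X q.2) ≠ 0 := by
      rw [Finset.prod_ne_zero_iff]
      intro q hq
      apply phi_fac_ne _ _ _ _ hlt (h1 q (Finset.mem_insert_of_mem hq))
      intro h
      have : q = p := h
      exact hp (this ▸ hq)
    have hg0 := (mul_eq_zero.1 h0).resolve_left hne
    obtain ⟨k, hk⟩ := (dvd_iff_phi p.1 p.2 hlt.ne g).2 hg0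
    rw [Finset.prod_insert hp]
    exact ⟨k, by rw [hg, hk]; ring⟩

lemma P_symm (n : ℕ) : SymmP (P n) := by
  intro w
  have key : ∀ (w : Equiv.Perm (Fin n)) (p : Fin n × Fin n), p.1 < p.2 →
      (fun q : Fin n × Fin n => if w q.1 < w q.2 then (w q.1, w q.2) else (w q.2, w q.1)) p ∈
        Finset.univ.filter (fun p : Fin n × Fin n => p.1 < p.2) := by
    intro w p hp
    have : w p.1 ≠ w p.2 := fun h => hp.ne (w.injective h)
    simp only [Finset.mem_filter, Finset.mem_univ, true_and]
    split_ifs with h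
    · exact h
    · exact lt_of_le_of_ne (not_lt.1 h) this.symm
  unfold P
  rw [map_prod]
  refine Finset.prod_nbij'
    (fun q => if w q.1 < w q.2 then (w q.1, w q.2) else (w q.2, w q.1))
    (fun q => if w.symm q.1 < w.symm q.2 then (w.symm q.1, w.symm q.2)
      else (w.symm q.2, w.symm q.1)) ?_ ?_ ?_ ?_ ?_
  · intro p hp
    exact key w p (Finset.mem_filter.1 hp).2
  · intro p hp
    exact key w.symm p (Finset.mem_filter.1 hp).2
  · rintro ⟨a, b⟩ hp
    have hlt : a < b := (Finset.mem_filter.1 hp).2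
    by_cases h : w a < w b <;> simp [h, hlt, hlt.not_gt]
  · rintro ⟨a, b⟩ hp
    have hlt : a < b := (Finset.mem_filter.1 hp).2
    by_cases h : w.symm a < w.symm b <;> simp [h, hlt, hlt.not_gt]
  · intro p _
    rw [permHom_fac]
    split_ifs
    · rfl
    · rw [mul_comm]

lemma fac_ne_zero {n : ℕ} (i j : Fin n) (h : i < j) : (1 - X i * X j : R n) ≠ 0 := by
  rw [XX, AddMonoidAlgebra.one_def, sub_ne_zero]
  intro hE
  have hE' := (AddMonoidAlgebra.single_left_injective (R := ℤ) (one_ne_zero)) hE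
  have := congrFun hE' i
  simp [h.ne] at this

lemma P_ne_zero (n : ℕ) : P n ≠ 0 := by
  unfold P
  rw [Finset.prod_ne_zero_iff]
  intro p hp
  exact fac_ne_zero _ _ (Finset.mem_filter.1 hp).2

lemma exists_perm_two {n : ℕ} (a b i j : Fin n) (hab : a ≠ b) (hij : i ≠ j) :
    ∃ w : Equiv.Perm (Fin n), w a = i ∧ w b = j := by
  refine ⟨Equiv.swap (Equiv.swap a i b) j * Equiv.swap a i, ?_, ?_⟩
  · rw [Equiv.Perm.mul_apply, Equiv.swap_apply_left]
    apply Equiv.swap_apply_of_ne_of_ne _ hij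
    intro h
    apply hab
    apply (Equiv.swap a i).injective
    rw [Equiv.swap_apply_left]; exact h
  · rw [Equiv.Perm.mul_apply, Equiv.swap_apply_left]

/-- For `n ≥ 2`, if a symmetric Laurent polynomial `f` is
divisible in `Rₙ` by `1 - x_{n-1} xₙ` (the last two variables, `1`-indexed),
then `f = (∏_{1 ≤ i < j ≤ n} (1 - xᵢxⱼ)) ⬝ g` with `g` again a symmetric
Laurent polynomial. -/
theorem dvd_of_symm_dvd_last (n : ℕ) (hn : 2 ≤ n) (f : R n) (hf : SymmP f)
    (hdvd : (1 - X (⟨n - 2, by omega⟩ : Fin n) * X (⟨n - 1, by omega⟩ : Fin n)) ∣ f) :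
    ∃ g : R n, SymmP g ∧ f = P n * g := by
  have hall : ∀ p ∈ Finset.univ.filter (fun p : Fin n × Fin n => p.1 < p.2),
      (1 - X p.1 * X p.2) ∣ f := by
    intro p hp
    have hlt := (Finset.mem_filter.1 hp).2
    obtain ⟨w, h1, h2⟩ := exists_perm_two (⟨n - 2, by omega⟩ : Fin n) ⟨n - 1, by omega⟩ p.1 p.2
      (by intro h; rw [Fin.mk.injEq] at h; omega) hlt.ne
    have := map_dvd (permHom w) hdvd
    rwa [permHom_fac, h1, h2, hf w] at this
  obtain ⟨g, hg⟩ := prod_dvd_aux f _ (fun p hp => (Finset.mem_filter.1 hp).2) hall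
  have hg' : f = P n * g := hg
  refine ⟨g, fun w => ?_, hg'⟩
  have h := hf w
  rw [hg', map_mul, P_symm n w] at h
  exact mul_left_cancel₀ (P_ne_zero n) h

end
end

section
/- Let n, k be integers with 1 ≤ k and 2k ≤ n, and let a ∈ ℤ. In the field of fractions of R_n set F := (x_1 x_2 ⋯ x_{2k})^{a} · (∏_{1 ≤ i < j ≤ n, j > 2k} (1 − x_i x_j)) / (∏_{1 ≤ i < j ≤ n} (1 − x_i^{−1} x_j)) and E := ∑_{w ∈ S_n} w(F). Then E is a Laurent polynomial, i.e. E ∈ R_n; it is symmetric, E ∈ R_n^{S_n}; and moreover E ∈ J_n, i.e. ev_n(E) does not involve t. -/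
/-!
Common setup: `R n` is the ring of Laurent polynomials
`ℤ[x₁^{±1}, …, xₙ^{±1}]`, realized as the group algebra over `ℤ` of the
group `ℤ^n` of exponent vectors (`AddMonoidAlgebra ℤ (Fin n → ℤ)`).
-/

noncomputable section

/-- The numerator of `F`:
`(x₁x₂⋯x_{2k})^a ⬝ ∏_{1 ≤ i < j ≤ n, j > 2k} (1 - xᵢxⱼ)`, where the first
factor is the monomial with exponent `a` in each of the first `2k`
variables. -/
def numF (n k : ℕ) (a : ℤ) : R n :=
  AddMonoidAlgebra.single (fun i : Fin n => if (i : ℕ) < 2 * k then a else 0) (1 : ℤ) *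
    ∏ p ∈ Finset.univ.filter
        (fun p : Fin n × Fin n => p.1 < p.2 ∧ 2 * k ≤ (p.2 : ℕ)),
      (1 - X p.1 * X p.2)

/-- The denominator of `F`: `∏_{1 ≤ i < j ≤ n} (1 - xᵢ⁻¹ xⱼ)` (an element of
`Rₙ`, since `Rₙ` consists of Laurent polynomials). -/
def denF (n : ℕ) : R n :=
  ∏ p ∈ Finset.univ.filter (fun p : Fin n × Fin n => p.1 < p.2),
    (1 - Xinv p.1 * X p.2)

instance instIsDomainR (n : ℕ) : IsDomain (R n) := NoZeroDivisors.to_isDomain _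


open Finset in
/-- Pairs `i < j`. -/
def prs (m : ℕ) : Finset (Fin m × Fin m) := Finset.univ.filter (fun p : Fin m × Fin m => p.1 < p.2)

/-- Vandermonde product. -/
def vd {B : Type*} [CommRing B] {m : ℕ} (v : Fin m → B) : B := ∏ p ∈ prs m, (v p.2 - v p.1)

lemma vd_eq_det {B : Type*} [CommRing B] {m : ℕ} (v : Fin m → B) :
    vd v = (Matrix.vandermonde v).det := by
  rw [Matrix.det_vandermonde, vd, prs, Finset.prod_filter, Fintype.prod_prod_type]
  refine Finset.prod_congr rfl fun i _ => ?_
  rw [← Finset.prod_filter]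
  refine Finset.prod_congr ?_ fun _ _ => rfl
  ext j; simp

lemma vd_perm {B : Type*} [CommRing B] {m : ℕ} (v : Fin m → B) (w : Equiv.Perm (Fin m)) :
    vd (fun i => v (w i)) = ((Equiv.Perm.sign w : ℤ) : B) * vd v := by
  rw [vd_eq_det, vd_eq_det, ← Matrix.det_permute]
  rfl

lemma vd_factor {B : Type*} [CommRing B] {m : ℕ} (v u : Fin m → B) (h : ∀ i, u i * v i = 1) :
    (∏ p ∈ prs m, (1 - v p.1 * u p.2)) * ∏ j, v j ^ (j : ℕ) = vd v := by
  have h2 : ∏ j, v j ^ (j : ℕ) = ∏ p ∈ prs m, v p.2 := by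
    rw [prs, Finset.prod_filter, Fintype.prod_prod_type_right]
    refine Finset.prod_congr rfl fun j _ => ?_
    simp only
    rw [← Finset.prod_filter, Finset.prod_const]
    congr 1
    rw [show (Finset.univ.filter (fun i : Fin m => i < j)) = Finset.Iio j by ext; simp]
    simp
  rw [h2, vd, ← Finset.prod_mul_distrib]
  refine Finset.prod_congr rfl fun p _ => ?_
  linear_combination (-v p.1) * h p.2

lemma vd_sum {B : Type*} [CommRing B] {m : ℕ} (v : Fin m → B) :
    ∑ w : Equiv.Perm (Fin m), ((Equiv.Perm.sign w : ℤ) : B) * ∏ j, v (w j) ^ (j : ℕ) = vd v := by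
  rw [vd_eq_det, Matrix.det_apply']
  rfl

lemma vd_ne_zero {B : Type*} [CommRing B] [IsDomain B] {m : ℕ} (v : Fin m → B)
    (h : Function.Injective v) : vd v ≠ 0 := by
  rw [vd_eq_det, Matrix.det_vandermonde_ne_zero_iff]; exact h

lemma sign_sq {B : Type*} [CommRing B] {m : ℕ} (w : Equiv.Perm (Fin m)) :
    ((Equiv.Perm.sign w : ℤ) : B) * ((Equiv.Perm.sign w : ℤ) : B) = 1 := by
  rcases Int.units_eq_one_or (Equiv.Perm.sign w) with h | h <;> simp [h]

/-- Weyl denominator identity. -/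
lemma weyl_sum {K : Type*} [Field K] {m : ℕ} (y : Fin m → K) (h0 : ∀ i, y i ≠ 0)
    (hy : Function.Injective y) :
    ∑ w : Equiv.Perm (Fin m), ∏ p ∈ prs m, (1 - (y (w p.1))⁻¹ * y (w p.2))⁻¹ = 1 := by
  have hV : vd (fun i => (y i)⁻¹) ≠ 0 := vd_ne_zero _ (fun i j h => hy (inv_injective h))
  have : ∀ w : Equiv.Perm (Fin m), ∏ p ∈ prs m, (1 - (y (w p.1))⁻¹ * y (w p.2))⁻¹ =
      ((Equiv.Perm.sign w : ℤ) : K) * (∏ j, (y (w j))⁻¹ ^ (j : ℕ)) * (vd (fun i => (y i)⁻¹))⁻¹ := by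
    intro w
    have h1 := vd_factor (fun i => (y (w i))⁻¹) (fun i => y (w i)) (fun i => mul_inv_cancel₀ (h0 _))
    have h2 := vd_perm (fun i => (y i)⁻¹) w
    have h3 := sign_sq (B := K) w
    rw [h2] at h1
    have hD : (∏ p ∈ prs m, (1 - (y (w p.1))⁻¹ * y (w p.2))) ≠ 0 := by
      intro h
      simp only [h, zero_mul] at h1
      rcases mul_eq_zero.1 h1.symm with h | h
      · simp [h] at h3
      · exact hV h
    rw [Finset.prod_inv_distrib]
    rw [eq_mul_inv_iff_mul_eq₀ hV, inv_mul_eq_iff_eq_mul₀ hD]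
    linear_combination (-((Equiv.Perm.sign w : ℤ) : K)) * h1 - vd (fun i => (y i)⁻¹) * h3
  simp_rw [this]
  rw [← Finset.sum_mul, vd_sum (fun i => (y i)⁻¹), mul_inv_cancel₀ hV]

lemma permHom_single {n : ℕ} (w : Equiv.Perm (Fin n)) (m : Fin n → ℤ) (c : ℤ) :
    permHom w (AddMonoidAlgebra.single m c) = AddMonoidAlgebra.single (m ∘ w.symm) c := by
  simp [permHom, permExp]

lemma pisingle_comp {n : ℕ} (w : Equiv.Perm (Fin n)) (i : Fin n) (c : ℤ) :
    (Pi.single i c : Fin n → ℤ) ∘ w.symm = Pi.single (w i) c := by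
  ext l
  simp [Pi.single_apply, Equiv.symm_apply_eq]

lemma permHom_Xinv {n : ℕ} (w : Equiv.Perm (Fin n)) (i : Fin n) :
    permHom w (Xinv i) = Xinv (w i) := by
  rw [Xinv, permHom_single, pisingle_comp, Xinv]

lemma X_mul_Xinv {n : ℕ} (i : Fin n) : X i * Xinv i = 1 := by
  simp only [X, Xinv, AddMonoidAlgebra.single_mul_single, ← Pi.single_add]
  simp [AddMonoidAlgebra.one_def]

lemma permHom_mul {n : ℕ} (u w : Equiv.Perm (Fin n)) (f : R n) :
    permHom u (permHom w f) = permHom (u * w) f := by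
  have : (permHom u).comp (permHom w) = permHom (u * w) := by
    apply AddMonoidAlgebra.ringHom_ext
    · intro r
      simp only [RingHom.comp_apply, permHom_single]
      rfl
    · intro r
      simp only [RingHom.comp_apply, permHom_single]
      rfl
  rw [← this]; rfl

/-- Exponent map of the substitution `x_j ↦ x_i`. -/
def subExp {n : ℕ} (i j : Fin n) : (Fin n → ℤ) →+ (Fin n → ℤ) :=
  AddMonoidHom.mk' (fun m => m + Pi.single i (m j) - Pi.single j (m j)) (by
    intro a b
    simp only [Pi.add_apply, Pi.single_add]
    abel)

/-- The substitution `x_j ↦ x_i`. -/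
def subHom {n : ℕ} (i j : Fin n) : R n →+* R n :=
  AddMonoidAlgebra.mapDomainRingHom ℤ (subExp i j)

lemma subHom_single {n : ℕ} (i j : Fin n) (m : Fin n → ℤ) (c : ℤ) :
    subHom i j (AddMonoidAlgebra.single m c) =
      AddMonoidAlgebra.single (m + Pi.single i (m j) - Pi.single j (m j)) c := by
  simp [subHom, subExp]

lemma subHom_swap {n : ℕ} (i j : Fin n) (hij : i ≠ j) (f : R n) :
    subHom i j (permHom (Equiv.swap i j) f) = subHom i j f := by
  have : (subHom i j).comp (permHom (Equiv.swap i j)) = subHom i j := by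
    apply AddMonoidAlgebra.ringHom_ext
    · intro r
      simp only [RingHom.comp_apply, permHom_single]
      rfl
    · intro m
      simp only [RingHom.comp_apply, permHom_single, subHom_single]
      congr 1
      ext l
      simp only [Pi.add_apply, Pi.sub_apply, Function.comp_apply, Equiv.symm_swap,
        Equiv.swap_apply_right, Pi.single_apply]
      by_cases h1 : l = i
      · subst h1; simp [hij]; ring
      · by_cases h2 : l = j
        · subst h2; simp [h1]
        · simp [h1, h2, Equiv.swap_apply_of_ne_of_ne]
  exact congrArg (fun g => g f) this

lemma dvd_single {n : ℕ} (i j : Fin n) (c : ℤ) :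
    (Xinv j - Xinv i : R n) ∣ AddMonoidAlgebra.single (Pi.single j c) 1 -
      AddMonoidAlgebra.single (Pi.single i c) 1 := by
  have key : ∀ c : ℕ, (Xinv j - Xinv i : R n) ∣ AddMonoidAlgebra.single (Pi.single j (-(c : ℤ))) 1 -
      AddMonoidAlgebra.single (Pi.single i (-(c : ℤ))) 1 := by
    intro c
    have := sub_dvd_pow_sub_pow (Xinv j : R n) (Xinv i) c
    simp only [Xinv, AddMonoidAlgebra.single_pow, ← Pi.single_smul] at this ⊢
    simpa using this
  obtain ⟨c, rfl | rfl⟩ := c.eq_nat_or_neg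
  · have h := (key c).mul_left (AddMonoidAlgebra.single (Pi.single j (c : ℤ) + Pi.single i (c : ℤ)) (-1))
    convert h using 1
    rw [mul_sub, AddMonoidAlgebra.single_mul_single, AddMonoidAlgebra.single_mul_single]
    rw [show (Pi.single j (c : ℤ) + Pi.single i (c : ℤ) + Pi.single j (-(c : ℤ)) : Fin n → ℤ) = Pi.single i (c : ℤ) by
      rw [Pi.single_neg]; abel]
    rw [show (Pi.single j (c : ℤ) + Pi.single i (c : ℤ) + Pi.single i (-(c : ℤ)) : Fin n → ℤ) = Pi.single j (c : ℤ) by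
      rw [Pi.single_neg]; abel]
    simp only [mul_one, AddMonoidAlgebra.single_neg]
    abel
  · exact key c

lemma dvd_sub_subHom {n : ℕ} (i j : Fin n) (f : R n) :
    (Xinv j - Xinv i : R n) ∣ f - subHom i j f := by
  rw [← Ideal.mem_span_singleton, ← Ideal.Quotient.mk_eq_mk_iff_sub_mem]
  have : (Ideal.Quotient.mk (Ideal.span {(Xinv j - Xinv i : R n)})) =
      (Ideal.Quotient.mk (Ideal.span {(Xinv j - Xinv i : R n)})).comp (subHom i j) := by
    apply AddMonoidAlgebra.ringHom_ext
    · intro r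
      simp only [RingHom.comp_apply, subHom_single]
      simp
    · intro m
      simp only [RingHom.comp_apply, subHom_single]
      rw [Ideal.Quotient.mk_eq_mk_iff_sub_mem, Ideal.mem_span_singleton]
      have h := (dvd_single i j (m j)).mul_left (AddMonoidAlgebra.single (m - Pi.single j (m j)) 1)
      rw [mul_sub, AddMonoidAlgebra.single_mul_single, AddMonoidAlgebra.single_mul_single] at h
      convert h using 3
      · simp
      · simp
      · abel
      · simp
  exact congrArg (fun g => g f) this

lemma dvd_of_subHom_eq_zero {n : ℕ} (i j : Fin n) (f : R n) (h : subHom i j f = 0) :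
    (Xinv j - Xinv i : R n) ∣ f := by
  have := dvd_sub_subHom i j f
  rwa [h, sub_zero] at this

lemma Xinv_injective (n : ℕ) : Function.Injective (Xinv : Fin n → R n) := by
  intro i j h
  simp only [Xinv] at h
  have := congrArg (fun f => f.coeff (Pi.single i (-1))) h
  by_contra hne
  simp [Finsupp.single_apply] at this
  have h2 := congrFun this i
  simp [Pi.single_apply, hne] at h2

lemma subHom_Xinv {n : ℕ} (i j l : Fin n) :
    subHom i j (Xinv l) = if l = j then Xinv i else Xinv l := by
  rw [Xinv, subHom_single]
  split_ifs with h
  · subst h; simp [Xinv]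
  · have : j ≠ l := Ne.symm h
    simp [Xinv, Pi.single_apply, this]

lemma vd_dvd {n : ℕ} (A : R n) (h : ∀ p ∈ prs n, subHom p.1 p.2 A = 0) :
    vd (Xinv : Fin n → R n) ∣ A := by
  unfold vd
  have : ∀ s ⊆ prs n, ∏ p ∈ s, (Xinv p.2 - Xinv p.1 : R n) ∣ A := by
    intro s
    induction s using Finset.induction_on with
    | empty => intro _; simp
    | insert q s hq ih =>
      intro hs
      obtain ⟨B, hB⟩ := ih (fun x hx => hs (Finset.mem_insert_of_mem hx))
      have hqp := hs (Finset.mem_insert_self q s)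
      have h0 := h q hqp
      rw [hB, map_mul, map_prod] at h0
      have hne : ∏ p ∈ s, subHom q.1 q.2 (Xinv p.2 - Xinv p.1 : R n) ≠ 0 := by
        rw [Finset.prod_ne_zero_iff]
        intro p hp h1
        have hpp := hs (Finset.mem_insert_of_mem hp)
        have hpq : p ≠ q := fun h => hq (h ▸ hp)
        simp only [prs, Finset.mem_filter, Finset.mem_univ, true_and] at hpp hqp
        rw [map_sub, subHom_Xinv, subHom_Xinv, sub_eq_zero] at h1
        apply hpq
        obtain ⟨p1, p2⟩ := p
        obtain ⟨q1, q2⟩ := q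
        simp only at *
        split_ifs at h1 with ha hb hb
        · subst ha; subst hb; exact absurd hpp (lt_irrefl _)
        · have := Xinv_injective _ h1; subst ha; subst this; rfl
        · have := Xinv_injective _ h1; subst hb; subst this; exact absurd (hpp.trans hqp) (lt_irrefl _)
        · have := Xinv_injective _ h1; subst this; exact absurd hpp (lt_irrefl _)
      have h2 := (mul_eq_zero.1 h0).resolve_left hne
      obtain ⟨C, hC⟩ := dvd_of_subHom_eq_zero _ _ _ h2
      rw [Finset.prod_insert hq]
      exact ⟨C, by rw [hB, hC]; ring⟩
  exact this _ subset_rfl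

lemma charZero_ama (G : Type*) [AddCommMonoid G] : CharZero (AddMonoidAlgebra ℤ G) := by
  refine ⟨fun a b h => ?_⟩
  have h3 : ((a : ℤ) : AddMonoidAlgebra ℤ G) = ((b : ℤ) : AddMonoidAlgebra ℤ G) := by
    push_cast; exact h
  have := congrArg (fun f => f.coeff 0) h3
  simpa [AddMonoidAlgebra.intCast_def] using this

/-- Antisymmetrized numerator. -/
def asym {n : ℕ} (f : R n) : R n :=
  ∑ w : Equiv.Perm (Fin n), ((Equiv.Perm.sign w : ℤ) : R n) *
    permHom w (f * ∏ j, Xinv j ^ (j : ℕ))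

lemma permHom_asym {n : ℕ} (f : R n) (u : Equiv.Perm (Fin n)) :
    permHom u (asym f) = ((Equiv.Perm.sign u : ℤ) : R n) * asym f := by
  simp only [asym, map_sum, Finset.mul_sum, map_mul (permHom u), permHom_mul, map_intCast]
  refine Fintype.sum_equiv (Equiv.mulLeft u) _ _ fun w => ?_
  simp only [Equiv.coe_mulLeft, Equiv.Perm.sign_mul, Units.val_mul, Int.cast_mul]
  have := sign_sq (B := R n) u
  linear_combination (-((Equiv.Perm.sign w : ℤ) : R n) * permHom (u * w) (f * ∏ j, Xinv j ^ (j : ℕ))) * this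

lemma vd_dvd_asym {n : ℕ} (f : R n) : vd (Xinv : Fin n → R n) ∣ asym f := by
  apply vd_dvd
  intro p hp
  have hne : p.1 ≠ p.2 := by
    simp only [prs, Finset.mem_filter, Finset.mem_univ, true_and] at hp
    exact hp.ne
  have h1 := subHom_swap p.1 p.2 hne (asym f)
  rw [permHom_asym, Equiv.Perm.sign_swap hne] at h1
  simp only [Units.val_neg, Units.val_one, Int.cast_neg, Int.cast_one, neg_mul, one_mul, map_neg] at h1
  have := charZero_ama (Fin n → ℤ)
  exact self_eq_neg.1 h1.symm

lemma permHom_vd {n : ℕ} (u : Equiv.Perm (Fin n)) :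
    permHom u (vd (Xinv : Fin n → R n)) = ((Equiv.Perm.sign u : ℤ) : R n) * vd Xinv := by
  rw [← vd_perm]
  simp [vd, map_prod, permHom_Xinv]

lemma denF_mul {n : ℕ} : denF n * ∏ j, Xinv j ^ (j : ℕ) = vd (Xinv : Fin n → R n) :=
  vd_factor _ _ X_mul_Xinv

lemma exists_e {n : ℕ} (f : R n) : ∃ e : R n, SymmP e ∧
    ∀ (K : Type) [Field K] (h : R n →+* K), h (vd Xinv) ≠ 0 →
      h e = ∑ w : Equiv.Perm (Fin n), h (permHom w f) * (h (permHom w (denF n)))⁻¹ := by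
  obtain ⟨e, he⟩ := vd_dvd_asym f
  have hv : vd (Xinv : Fin n → R n) ≠ 0 := vd_ne_zero _ (Xinv_injective n)
  refine ⟨e, fun u => ?_, fun K _ h hne => ?_⟩
  · have h1 := permHom_asym f u
    rw [he, map_mul, permHom_vd, mul_assoc] at h1
    have h2 := sign_sq (B := R n) u
    apply mul_left_cancel₀ hv
    linear_combination ((Equiv.Perm.sign u : ℤ) : R n) * h1 + (vd Xinv * e - vd Xinv * permHom u e) * h2
  · have h1 := congrArg h he
    rw [map_mul] at h1
    apply mul_left_cancel₀ hne
    rw [← h1, asym, map_sum, Finset.mul_sum]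
    refine Finset.sum_congr rfl fun w _ => ?_
    have h3 := congrArg (fun z => h (permHom w z)) (denF_mul (n := n))
    simp only [permHom_vd, map_mul, map_intCast] at h3
    have h2 := sign_sq (B := K) w
    have hd : h (permHom w (denF n)) ≠ 0 := by
      intro h0
      rw [h0, zero_mul] at h3
      rcases mul_eq_zero.1 h3.symm with h | h
      · simp [h] at h2
      · exact hne h
    simp only [map_mul, map_intCast]
    field_simp
    linear_combination ((Equiv.Perm.sign w : ℤ) : K) * h (permHom w f) * h3 + h (permHom w f) * h (vd Xinv) * h2

lemma hom_single {n : ℕ} {K : Type*} [Field K] (h : R n →+* K) (m : Fin n → ℤ) :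
    h (AddMonoidAlgebra.single m 1) = ∏ i, h (X i) ^ (m i) := by
  let φ : Multiplicative (Fin n → ℤ) →* K :=
    { toFun := fun m => h (AddMonoidAlgebra.single (Multiplicative.toAdd m) 1)
      map_one' := by
        rw [toAdd_one, ← AddMonoidAlgebra.one_def, map_one]
      map_mul' := fun a b => by
        rw [← map_mul, AddMonoidAlgebra.single_mul_single, toAdd_mul, one_mul] }
  have h1 : ∀ m, φ (Multiplicative.ofAdd m) = h (AddMonoidAlgebra.single m 1) := fun m => rfl
  rw [← h1]
  have h2 : Multiplicative.ofAdd m =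
      ∏ i, (Multiplicative.ofAdd (Pi.single i (1 : ℤ) : Fin n → ℤ)) ^ (m i) := by
    simp_rw [← ofAdd_zsmul]
    rw [← ofAdd_sum]
    congr 1
    ext l
    simp [Finset.sum_apply, Pi.single_apply]
  rw [h2, map_prod]
  refine Finset.prod_congr rfl fun i _ => ?_
  rw [map_zpow]
  rfl

lemma hom_X_ne {n : ℕ} {K : Type*} [Field K] (h : R n →+* K) (i : Fin n) : h (X i) ≠ 0 := by
  intro h0
  have := congrArg h (X_mul_Xinv i)
  rw [map_mul, h0, zero_mul, map_one] at this
  exact zero_ne_one this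

lemma hom_Xinv {n : ℕ} {K : Type*} [Field K] (h : R n →+* K) (i : Fin n) :
    h (Xinv i) = (h (X i))⁻¹ := by
  have := congrArg h (X_mul_Xinv i)
  rw [map_mul, map_one] at this
  exact eq_inv_of_mul_eq_one_right this

/-- Pairs `i < j` with `j > 2k`. -/
def prsQ (n k : ℕ) : Finset (Fin n × Fin n) :=
  Finset.univ.filter (fun p : Fin n × Fin n => p.1 < p.2 ∧ 2 * k ≤ (p.2 : ℕ))

/-- The part of `F` symmetric in the first `2k` variables. -/
def GG {K : Type*} [Field K] (n k : ℕ) (a : ℤ) (y : Fin n → K) : K :=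
  (∏ i, y i ^ (if (i : ℕ) < 2 * k then a else 0)) *
    ∏ p ∈ prsQ n k, ((1 - y p.1 * y p.2) * (1 - (y p.1)⁻¹ * y p.2)⁻¹)

lemma F_eq {n k : ℕ} (hkn : 2 * k ≤ n) {a : ℤ} {K : Type*} [Field K] (h : R n →+* K)
    (w : Equiv.Perm (Fin n)) :
    h (permHom w (numF n k a)) * (h (permHom w (denF n)))⁻¹ =
      GG n k a (fun i => h (X (w i))) *
        ∏ p ∈ prs (2 * k), (1 - (h (X (w (Fin.castLE hkn p.1))))⁻¹ * h (X (w (Fin.castLE hkn p.2))))⁻¹ := by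
  have e1 : h (permHom w (numF n k a)) = (∏ i, h (X (w i)) ^ (if (i : ℕ) < 2 * k then a else 0)) *
      ∏ p ∈ prsQ n k, (1 - h (X (w p.1)) * h (X (w p.2))) := by
    rw [numF, map_mul, map_mul, permHom_single, hom_single]
    congr 1
    · rw [← Equiv.prod_comp w]
      simp
    · simp [map_prod, permHom_X, prsQ]
  have e2 : h (permHom w (denF n)) = ∏ p ∈ prs n, (1 - (h (X (w p.1)))⁻¹ * h (X (w p.2))) := by
    simp [denF, map_prod, permHom_X, permHom_Xinv, hom_Xinv, prs]
  rw [e1, e2, ← Finset.prod_inv_distrib, GG, Finset.prod_mul_distrib]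
  have e3 : ∏ p ∈ prs n, (1 - (h (X (w p.1)))⁻¹ * h (X (w p.2)))⁻¹ =
      (∏ p ∈ prsQ n k, (1 - (h (X (w p.1)))⁻¹ * h (X (w p.2)))⁻¹) *
      ∏ p ∈ prs (2 * k), (1 - (h (X (w (Fin.castLE hkn p.1))))⁻¹ * h (X (w (Fin.castLE hkn p.2))))⁻¹ := by
    rw [← Finset.prod_filter_mul_prod_filter_not (prs n) (fun p => 2 * k ≤ (p.2 : ℕ))]
    congr 1
    · rw [prs, prsQ, Finset.filter_filter]
    · symm
      refine Finset.prod_bij (fun p _ => (Fin.castLE hkn p.1, Fin.castLE hkn p.2)) ?_ ?_ ?_ ?_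
      · intro p hp
        simp only [prs, Finset.mem_filter, Finset.mem_univ, true_and] at hp ⊢
        exact ⟨hp, not_le.2 p.2.2⟩
      · intro p _ q _ hpq
        simp only [Prod.mk.injEq, Fin.castLE_inj] at hpq
        exact Prod.ext hpq.1 hpq.2
      · intro q hq
        simp only [prs, Finset.mem_filter, Finset.mem_univ, true_and, Fin.lt_def] at hq
        refine ⟨(⟨q.1, by omega⟩, ⟨q.2, by omega⟩), ?_, ?_⟩
        · simp only [prs, Finset.mem_filter, Finset.mem_univ, true_and]
          exact hq.1
        · rfl
      · intro p _; rfl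
  rw [e3]; ring

lemma GG_inv {n k : ℕ} {a : ℤ} {K : Type*} [Field K] (y : Fin n → K)
    (u : Equiv.Perm (Fin n)) (hu1 : ∀ i : Fin n, (i : ℕ) < 2 * k → (u i : ℕ) < 2 * k)
    (hu2 : ∀ i : Fin n, 2 * k ≤ (i : ℕ) → u i = i) :
    GG n k a (fun i => y (u i)) = GG n k a y := by
  have hu3 : ∀ i : Fin n, (u i : ℕ) < 2 * k ↔ (i : ℕ) < 2 * k := by
    intro i
    refine ⟨fun h => ?_, hu1 i⟩
    by_contra h2
    rw [hu2 i (by omega)] at h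
    exact h2 h
  unfold GG
  congr 1
  · rw [← Equiv.prod_comp u (fun i => y i ^ (if (i : ℕ) < 2 * k then a else 0))]
    simp only [hu3]
  · refine Finset.prod_equiv (Equiv.prodCongr u u) ?_ ?_
    · intro p
      simp only [prsQ, Finset.mem_filter, Finset.mem_univ, true_and, Equiv.prodCongr_apply,
        Prod.map_fst, Prod.map_snd]
      by_cases h2 : 2 * k ≤ (p.2 : ℕ)
      · rw [hu2 _ h2]
        by_cases h1 : 2 * k ≤ (p.1 : ℕ)
        · rw [hu2 _ h1]
        · have := hu1 p.1 (by omega)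
          simp only [Fin.lt_def]
          omega
      · have := hu1 p.2 (by omega)
        omega
    · intro p _; rfl

lemma sum_avg {n k : ℕ} (hkn : 2 * k ≤ n) {a : ℤ} {K : Type*} [Field K] (h : R n →+* K)
    (hinj : Function.Injective (fun i => h (X i))) :
    ((2 * k).factorial : K) * ∑ w : Equiv.Perm (Fin n),
        h (permHom w (numF n k a)) * (h (permHom w (denF n)))⁻¹ =
      ∑ w : Equiv.Perm (Fin n), GG n k a (fun i => h (X (w i))) := by
  set T : Equiv.Perm (Fin n) → K := fun w =>
    h (permHom w (numF n k a)) * (h (permHom w (denF n)))⁻¹ with hT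
  let ι : Fin (2 * k) ↪ Fin n := Fin.castLEEmb hkn
  have step : ∀ u : Equiv.Perm (Fin (2 * k)), ∑ w, T w = ∑ w, T (w * u.viaFintypeEmbedding ι) :=
    fun u => (Equiv.sum_comp (Equiv.mulRight (u.viaFintypeEmbedding ι)) T).symm
  have e1 : ((2 * k).factorial : K) * ∑ w, T w =
      ∑ u : Equiv.Perm (Fin (2 * k)), ∑ w, T (w * u.viaFintypeEmbedding ι) := by
    rw [← Finset.sum_congr rfl (fun u _ => step u), Finset.sum_const, Finset.card_univ,
      Fintype.card_perm, Fintype.card_fin, nsmul_eq_mul]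
  rw [e1, Finset.sum_comm]
  refine Finset.sum_congr rfl fun w _ => ?_
  have e2 : ∀ u : Equiv.Perm (Fin (2 * k)), T (w * u.viaFintypeEmbedding ι) =
      GG n k a (fun i => h (X (w i))) * ∏ p ∈ prs (2 * k),
        (1 - (h (X (w (ι (u p.1)))))⁻¹ * h (X (w (ι (u p.2)))))⁻¹ := by
    intro u
    simp only [hT]
    rw [F_eq hkn]
    have him : ∀ i, u.viaFintypeEmbedding ι (Fin.castLE hkn i) = ι (u i) :=
      fun i => Equiv.Perm.viaFintypeEmbedding_apply_image u ι i
    simp only [Equiv.Perm.mul_apply, him]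
    congr 1
    refine GG_inv (fun i => h (X (w i))) (u.viaFintypeEmbedding ι) ?_ ?_
    · intro i hi
      have : i = Fin.castLE hkn ⟨i, hi⟩ := by ext; simp
      rw [this, him]
      exact (u _).2
    · intro i hi
      apply Equiv.Perm.viaFintypeEmbedding_apply_notMem_range
      rintro ⟨l, rfl⟩
      have : (l : ℕ) < 2 * k := l.2
      have h2 : ((ι l : Fin n) : ℕ) = l := rfl
      omega
  simp_rw [e2]
  rw [← Finset.mul_sum, weyl_sum (fun i => h (X (w (ι i)))) (fun i => hom_X_ne h _), mul_one]
  intro i j hij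
  exact ι.injective (w.injective (hinj hij))

lemma prod_two {ι K : Type*} [Fintype ι] [DecidableEq ι] [Field K] (f g : ι → K) (p q : ι)
    (hpq : p ≠ q) (hf : f p * f q = g p * g q) (hfg : ∀ i, i ≠ p → i ≠ q → f i = g i) :
    ∏ i, f i = ∏ i, g i := by
  rw [← Finset.mul_prod_erase _ f (Finset.mem_univ p), ← Finset.mul_prod_erase _ g (Finset.mem_univ p),
    ← Finset.mul_prod_erase _ f (a := q) (by simp [hpq.symm]),
    ← Finset.mul_prod_erase _ g (a := q) (by simp [hpq.symm]), ← mul_assoc, ← mul_assoc, hf]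
  congr 1
  refine Finset.prod_congr rfl fun i hi => ?_
  simp only [Finset.mem_erase, Finset.mem_univ, and_true] at hi
  exact hfg i hi.2 hi.1

lemma GG_eq {n k : ℕ} {a : ℤ} {K : Type*} [Field K] (y z : Fin n → K) (p q : Fin n) (hpq : p ≠ q)
    (hy0 : ∀ i, y i ≠ 0) (hz0 : ∀ i, z i ≠ 0)
    (hy : Function.Injective y) (hz : Function.Injective z) (hyp : y p * y q = 1)
    (hzp : z p * z q = 1) (hyz : ∀ i, i ≠ p → i ≠ q → y i = z i) :
    GG n k a y = GG n k a z := by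
  by_cases hc : (p : ℕ) < 2 * k ∧ (q : ℕ) < 2 * k
  · unfold GG
    congr 1
    · refine prod_two _ _ p q hpq ?_ ?_
      · simp only [hc.1, hc.2, if_true]
        rw [← mul_zpow, ← mul_zpow, hyp, hzp]
      · intro i h1 h2
        rw [hyz i h1 h2]
    · rw [prsQ, Finset.prod_filter, Finset.prod_filter, Fintype.prod_prod_type_right,
        Fintype.prod_prod_type_right]
      refine Finset.prod_congr rfl fun j _ => ?_
      by_cases hj : 2 * k ≤ (j : ℕ)
      · have hjp : j ≠ p := fun h => by subst h; omega
        have hjq : j ≠ q := fun h => by subst h; omega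
        have aux : ∀ x : Fin n → K, Function.Injective x → (∀ i, x i ≠ 0) → x p * x q = 1 →
            ((1 - x p * x j) * (1 - (x p)⁻¹ * x j)⁻¹) * ((1 - x q * x j) * (1 - (x q)⁻¹ * x j)⁻¹) = 1 := by
          intro x hx h0 h1
          have e1 : (x p)⁻¹ = x q := (eq_inv_of_mul_eq_one_right h1).symm
          have e2 : (x q)⁻¹ = x p := (eq_inv_of_mul_eq_one_left h1).symm
          have n1 : 1 - x q * x j ≠ 0 := by
            intro h
            apply hjp
            apply hx
            apply mul_left_cancel₀ (h0 q)
            linear_combination -h - h1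
          have n2 : 1 - x p * x j ≠ 0 := by
            intro h
            apply hjq
            apply hx
            apply mul_left_cancel₀ (h0 p)
            linear_combination -h - h1
          rw [e1, e2, mul_mul_mul_comm, mul_comm (1 - x q * x j)⁻¹, ← mul_mul_mul_comm,
            mul_inv_cancel₀ n2, mul_inv_cancel₀ n1, one_mul]
        refine prod_two _ _ p q hpq ?_ ?_
        · have l1 : p < j := by rw [Fin.lt_def]; omega
          have l2 : q < j := by rw [Fin.lt_def]; omega
          simp only [hj, l1, l2, and_self, if_true]
          rw [aux y hy hy0 hyp, aux z hz hz0 hzp]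
        · intro i h1 h2
          simp only [hyz i h1 h2, hyz j hjp hjq]
      · simp [hj]
  · have aux : ∀ x : Fin n → K, x p * x q = 1 → GG n k a x = 0 := by
      intro x hx
      unfold GG
      apply mul_eq_zero_of_right
      rcases lt_or_gt_of_ne hpq with hlt | hlt
      · refine Finset.prod_eq_zero (i := (p, q)) ?_ ?_
        · simp only [prsQ, Finset.mem_filter, Finset.mem_univ, true_and]
          rw [Fin.lt_def] at hlt ⊢
          omega
        · simp [hx]
      · refine Finset.prod_eq_zero (i := (q, p)) ?_ ?_
        · simp only [prsQ, Finset.mem_filter, Finset.mem_univ, true_and]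
          rw [Fin.lt_def] at hlt ⊢
          omega
        · simp [mul_comm (x q), hx]
    rw [aux y hyp, aux z hzp]

/-- Target ring of the evaluation. -/
abbrev TT (n : ℕ) : Type := AddMonoidAlgebra ℤ ((Fin (n - 2) → ℤ) × ℤ)

/-- `t ↦ t^2`. -/
def dblExp (n : ℕ) : ((Fin (n - 2) → ℤ) × ℤ) →+ ((Fin (n - 2) → ℤ) × ℤ) :=
  AddMonoidHom.mk' (fun m => (m.1, 2 * m.2)) (by
    intro a b
    ext <;> simp [mul_add])

/-- `t ↦ t^2`. -/
def dbl (n : ℕ) : TT n →+* TT n := AddMonoidAlgebra.mapDomainRingHom ℤ (dblExp n)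

lemma dblExp_inj (n : ℕ) : Function.Injective (dblExp n) := by
  intro a b h
  simp only [dblExp, AddMonoidHom.mk'_apply, Prod.mk.injEq] at h
  exact Prod.ext h.1 (by omega)

lemma noT_of_dbl (n : ℕ) (g : TT n) (h : dbl n g = g) : NoT n g := by
  have hs : ∀ N : ℕ, ∀ m : (Fin (n - 2) → ℤ) × ℤ, m.2.natAbs = N → m.2 ≠ 0 → g.coeff m = 0 := by
    intro N
    induction N using Nat.strong_induction_on with
    | _ N ih =>
      intro m hm hne
      by_cases hr : m ∈ Set.range (dblExp n)
      · obtain ⟨l, rfl⟩ := hr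
        have h1 : (dbl n g).coeff (dblExp n l) = g.coeff l := by
          simp only [dbl, AddMonoidAlgebra.mapDomainRingHom_apply, AddMonoidAlgebra.coeff_mapDomain]
          exact Finsupp.mapDomain_apply (dblExp_inj n) _ _
        rw [h] at h1
        rw [h1]
        have h2 : (dblExp n l).2 = 2 * l.2 := rfl
        rw [h2] at hm hne
        exact ih l.2.natAbs (by omega) l rfl (by omega)
      · rw [← h]
        simp only [dbl, AddMonoidAlgebra.mapDomainRingHom_apply, AddMonoidAlgebra.coeff_mapDomain]
        exact Finsupp.mapDomain_of_notMem_range _ _ hr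
  have hinj : Function.Injective (AddMonoidHom.inl (Fin (n - 2) → ℤ) ℤ) := by
    intro a b h; simpa using h
  refine ⟨AddMonoidAlgebra.comapDomain (AddMonoidHom.inl (Fin (n - 2) → ℤ) ℤ) hinj g, ?_⟩
  rw [AddMonoidAlgebra.mapDomainRingHom_apply]
  apply AddMonoidAlgebra.mapDomain_comapDomain
  intro m hm
  have hm2 : m.2 = 0 := by
    by_contra hne
    have := hs _ m rfl hne
    simp [this] at hm
  exact ⟨m.1, by ext <;> simp [hm2]⟩

/-- images of the variables. -/
lemma ev_X (n : ℕ) (i : Fin n) : ev n (X i) = AddMonoidAlgebra.single (evExp n (Pi.single i 1)) 1 := by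
  simp [ev, X]

lemma evExp_inj (n : ℕ) (hn : 2 ≤ n) (c : ℤ) (hc : c ≠ 0) :
    Function.Injective (fun i : Fin n => evExp n (Pi.single i c)) := by
  intro i j h
  simp only [evExp, AddMonoidHom.mk'_apply, hn, dif_pos, Prod.mk.injEq] at h
  obtain ⟨h1, h2⟩ := h
  by_contra hne
  by_cases hi : (i : ℕ) < n - 2
  · have := congrFun h1 ⟨i, hi⟩
    have hii : Fin.castLE (Nat.sub_le n 2) ⟨(i : ℕ), hi⟩ = i := by ext; rfl
    rw [hii] at this
    simp [Pi.single_apply, hne, hc] at this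
  · by_cases hj : (j : ℕ) < n - 2
    · have := congrFun h1 ⟨j, hj⟩
      have hii : Fin.castLE (Nat.sub_le n 2) ⟨(j : ℕ), hj⟩ = j := by ext; rfl
      rw [hii] at this
      simp [Ne.symm hne] at this
      exact hc this.symm
    · have hne' : (i : ℕ) ≠ j := fun h => hne (Fin.ext h)
      simp only [Pi.single_apply, Fin.ext_iff] at h2
      split_ifs at h2 <;> omega

lemma single_inj {G : Type*} [AddCommMonoid G] :
    Function.Injective (fun g : G => (AddMonoidAlgebra.single g 1 : AddMonoidAlgebra ℤ G)) := by
  intro a b h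
  have := congrArg (fun f => f.coeff a) h
  simp only [AddMonoidAlgebra.coeff_single] at this
  by_contra hne
  rw [Finsupp.single_eq_same, Finsupp.single_eq_of_ne hne] at this
  exact one_ne_zero this

theorem sum_perm_F_mem_J (n k : ℕ) (hk : 1 ≤ k) (hkn : 2 * k ≤ n) (a : ℤ) :
    ∃ e : R n, e ∈ J n ∧
      algebraMap (R n) (FractionRing (R n)) e =
        ∑ w : Equiv.Perm (Fin n),
          algebraMap (R n) (FractionRing (R n)) (permHom w (numF n k a)) *
            (algebraMap (R n) (FractionRing (R n)) (permHom w (denF n)))⁻¹ := by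
  obtain ⟨e, hes, he⟩ := exists_e (numF n k a)
  refine ⟨e, ⟨hes, fun hn => ?_⟩, ?_⟩
  · apply noT_of_dbl
    haveI : IsDomain (TT n) := NoZeroDivisors.to_isDomain _
    haveI : CharZero (TT n) := charZero_ama _
    haveI : CharZero (FractionRing (TT n)) := IsFractionRing.charZero _
    let al := algebraMap (TT n) (FractionRing (TT n))
    have hal : Function.Injective al := IsFractionRing.injective (TT n) (FractionRing (TT n))
    let h1 : R n →+* FractionRing (TT n) := al.comp (ev n)
    let h2 : R n →+* FractionRing (TT n) := al.comp ((dbl n).comp (ev n))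
    have h1X : ∀ i, h1 (X i) = al (AddMonoidAlgebra.single (evExp n (Pi.single i 1)) 1) := by
      intro i
      simp only [h1, RingHom.comp_apply, ev_X]
    have h2X : ∀ i, h2 (X i) =
        al (AddMonoidAlgebra.single (dblExp n (evExp n (Pi.single i 1))) 1) := by
      intro i
      simp only [h2, RingHom.comp_apply, ev_X]
      simp [dbl]
    have i1 : Function.Injective (fun i => h1 (X i)) := by
      intro i j h
      simp only [h1X] at h
      exact evExp_inj n hn 1 one_ne_zero (single_inj (hal h))
    have i2 : Function.Injective (fun i => h2 (X i)) := by
      intro i j h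
      simp only [h2X] at h
      exact evExp_inj n hn 1 one_ne_zero (dblExp_inj n (single_inj (hal h)))
    have nz : ∀ h : R n →+* FractionRing (TT n), Function.Injective (fun i => h (X i)) →
        h (vd Xinv) ≠ 0 := by
      intro h hi
      have : h (vd Xinv) = vd (fun i => (h (X i))⁻¹) := by
        simp [vd, map_prod, hom_Xinv]
      rw [this]
      exact vd_ne_zero _ (fun i j hij => hi (inv_injective hij))
    have key : h1 e = h2 e := by
      have hf : (((2 * k).factorial : ℕ) : FractionRing (TT n)) ≠ 0 :=
        Nat.cast_ne_zero.2 (Nat.factorial_ne_zero _)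
      apply mul_left_cancel₀ hf
      rw [he _ h1 (nz h1 i1), he _ h2 (nz h2 i2), sum_avg hkn h1 i1, sum_avg hkn h2 i2]
      refine Finset.sum_congr rfl fun w _ => ?_
      let P0 : Fin n := ⟨n - 2, by omega⟩
      let Q0 : Fin n := ⟨n - 1, by omega⟩
      have hPQ : P0 ≠ Q0 := by simp [P0, Q0, Fin.ext_iff]; omega
      have hE : evExp n (Pi.single P0 1) + evExp n (Pi.single Q0 1) = 0 := by
        rw [← map_add]
        simp only [evExp, AddMonoidHom.mk'_apply, hn, dif_pos, Prod.mk_eq_zero]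
        constructor
        · ext l
          have := l.2
          have l1 : Fin.castLE (Nat.sub_le n 2) l ≠ P0 := by
            simp [P0, Fin.ext_iff]; omega
          have l2 : Fin.castLE (Nat.sub_le n 2) l ≠ Q0 := by
            simp [Q0, Fin.ext_iff]; omega
          simp [Pi.single_apply, l1, l2]
        · change (Pi.single P0 1 + Pi.single Q0 1 : Fin n → ℤ) P0 -
            (Pi.single P0 1 + Pi.single Q0 1 : Fin n → ℤ) Q0 = 0
          simp [Pi.single_apply, hPQ, hPQ.symm]
      refine GG_eq _ _ (w.symm P0) (w.symm Q0) (fun h => hPQ (w.symm.injective h))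
        (fun i => hom_X_ne h1 _) (fun i => hom_X_ne h2 _) (i1.comp w.injective)
        (i2.comp w.injective) ?_ ?_ ?_
      · simp only [Equiv.apply_symm_apply]
        rw [h1X, h1X, ← map_mul, AddMonoidAlgebra.single_mul_single, hE, mul_one,
          ← AddMonoidAlgebra.one_def, map_one]
      · simp only [Equiv.apply_symm_apply]
        rw [h2X, h2X, ← map_mul, AddMonoidAlgebra.single_mul_single, ← map_add, hE, mul_one,
          map_zero, ← AddMonoidAlgebra.one_def, map_one]
      · intro i hi hj
        simp only [h1X, h2X]
        have n1 : P0 ≠ w i := fun h => hi (by rw [h]; simp)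
        have n2 : Q0 ≠ w i := fun h => hj (by rw [h]; simp)
        have : (evExp n (Pi.single (w i) 1)).2 = 0 := by
          simp only [evExp, AddMonoidHom.mk'_apply, hn, dif_pos]
          change (Pi.single (w i) 1 : Fin n → ℤ) P0 - (Pi.single (w i) 1 : Fin n → ℤ) Q0 = 0
          simp [Pi.single_apply, n1, n2]
        congr 2
        refine Prod.ext rfl ?_
        change _ = 2 * (evExp n (Pi.single (w i) 1)).2
        rw [this]; simp
    exact (hal key).symm
  · apply he
    intro h0
    exact vd_ne_zero _ (Xinv_injective n)
      ((IsFractionRing.injective (R n) (FractionRing (R n))) (by rw [h0, map_zero]))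

end
end
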